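/- arXiv:1602.00429 — 2 statements merged into one kernel-verified Lean document; each statement's English description precedes it below -/
import Mathlib

section
/- Let (R,m) be a Cohen–Macaulay Noetherian local ring and M, N finitely generated R-modules with N ≠ 0. Assume: (i) the depth formula holds for M and N at every localization, i.e., for every prime q in supp(M ⊗_R N), depth M_q + depth N_q = depth R_q + depth (M ⊗_R N)_q; (ii) (DI) holds at every localization: for every prime q and all nonzero finitely generated R_q-modules A and B with pd_{R_q} B < ∞ and A ⊗_{R_q} B of finite length, dim A + dim B ≤ dim R_q; (iii) there exists a finitely generated R-module L with pd_R L < ∞ and supp L = supp N. If M ⊗_R N satisfies Serre's condition S_n, i.e., depth (M ⊗_R N)_p ≥ min{n, ht p} for every prime p in supp(M ⊗_R N), then every prime p ∈ supp M with ht p < n belongs to supp N. -/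
/-!
STATEMENT 18: Let `R` be a Cohen–Macaulay Noetherian local ring and `M`, `N` finitely generated
with `N ≠ 0`. Assume (i) the depth formula for `M`, `N` holds at every localization at a prime
of `supp (M ⊗ N)`, (ii) (DI) holds at every localization, and (iii) there is a finitely
generated module `L` of finite projective dimension with `supp L = supp N`. If `M ⊗_R N`
satisfies Serre's condition `S_n`, then every prime `p ∈ supp M` with `ht p < n` lies in
`supp N`.
-/

open CategoryTheory CategoryTheory.Limits

open scoped TensorProduct

universe u

/-- The Krull dimension of a commutative ring, valued in `WithBot ℕ∞`. -/
noncomputable def ringDim (R : Type u) [CommRing R] : WithBot ℕ∞ := ringKrullDim R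

/-- The Krull dimension of a module `M`: the Krull dimension of `R ⧸ ann M`. -/
noncomputable def moduleDim (R : Type u) [CommRing R] (M : Type u) [AddCommGroup M]
    [Module R M] : WithBot ℕ∞ :=
  ringDim (R ⧸ Module.annihilator R M)

/-- The depth of a module over a Noetherian local ring: the supremum of lengths of `M`-regular
sequences of elements of the maximal ideal. -/
noncomputable def moduleDepth (R : Type u) [CommRing R] [IsLocalRing R]
    (M : Type u) [AddCommGroup M] [Module R M] : ℕ∞ :=
  sSup {n : ℕ∞ | ∃ rs : List R, n = (rs.length : ℕ∞) ∧
    (∀ x ∈ rs, x ∈ IsLocalRing.maximalIdeal R) ∧ RingTheory.Sequence.IsRegular M rs}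

/-- A module has finite projective dimension iff for some `n` the functors `Ext^i(M, -)`
vanish for all `i > n`. -/
def HasFinitePD (R : Type u) [CommRing R] (M : Type u) [AddCommGroup M] [Module R M] : Prop :=
  ∃ n : ℕ, ∀ i : ℕ, n < i → ∀ L : ModuleCat.{u} R,
    IsZero (((Ext R (ModuleCat.{u} R) i).obj (Opposite.op (ModuleCat.of R M))).obj L)

/-!
If `p ∈ supp M \ supp N`, choose `Q` minimal in `supp N ∩ V(p)`, so that `ht p < ht Q`. Then
`R_Q/pR_Q ⊗ L_Q` is supported at the closed point only, and (DI) bounds `dim N_Q = dim L_Q` by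
`dim R_Q - dim R_Q/pR_Q`, which is `ht p` because `R_Q` is again Cohen–Macaulay. Since
`depth M_Q ≤ depth R_Q`, the depth formula gives
`depth (M ⊗ N)_Q ≤ depth N_Q ≤ dim N_Q ≤ ht p < ht Q`, and `S_n` forces `n ≤ ht p`.

Both facts about the Cohen–Macaulay ring `R` come from the inequality
`depth M ≤ depth M_p + dim R/p`: a weakly regular sequence on `M` inside `p`, extended until `p`
lies in an associated prime, has length at least `depth M - dim R/p`.
-/

section FiniteProjectiveDimension

/- `HasFinitePD` speaks of the left derived functor `Ext R C`, Mathlib's projective dimension of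
`CategoryTheory.Abelian.Ext`, defined in the derived category: both are computed here on one and
the same projective resolution. -/
section ExtViaResolution

variable {R C : Type*} [Ring R] [Category* C] [Abelian C] {X : C}

lemma isZero_Ext_succ_iff [Linear R C] [EnoughProjectives C] (P : ProjectiveResolution X)
    (Y : C) (k : ℕ) :
    IsZero (((Ext R C (k + 1)).obj (Opposite.op X)).obj Y) ↔
      ∀ f : P.complex.X (k + 1) ⟶ Y, P.complex.d (k + 2) (k + 1) ≫ f = 0 →
        ∃ g : P.complex.X k ⟶ Y, P.complex.d (k + 1) k ≫ g = f := by
  rw [(P.isoExt (R := R) (k + 1) Y).isZero_iff, ← HomologicalComplex.exactAt_iff_isZero_homology,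
    HomologicalComplex.exactAt_iff' _ k (k + 1) (k + 2) (by simp) (by simp),
    ShortComplex.moduleCat_exact_iff]
  rfl

lemma subsingleton_abelianExt_succ_iff [HasExt C] (P : ProjectiveResolution X) (Y : C) (k : ℕ) :
    Subsingleton (Abelian.Ext X Y (k + 1)) ↔
      ∀ f : P.complex.X (k + 1) ⟶ Y, P.complex.d (k + 2) (k + 1) ≫ f = 0 →
        ∃ g : P.complex.X k ⟶ Y, P.complex.d (k + 1) k ≫ g = f := by
  refine ⟨fun h f hf ↦ (P.extMk_eq_zero_iff f (k + 2) rfl hf k rfl).mp (h.elim _ _), fun h ↦ ?_⟩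
  refine subsingleton_of_forall_eq 0 fun e ↦ ?_
  obtain ⟨f, hf, rfl⟩ := P.extMk_surjective e (k + 2) rfl
  exact (P.extMk_eq_zero_iff f (k + 2) rfl hf k rfl).mpr (h f hf)

end ExtViaResolution

variable {R : Type u} [CommRing R] {M : Type u} [AddCommGroup M] [Module R M]

lemma hasFinitePD_iff_exists_hasProjectiveDimensionLE :
    HasFinitePD R M ↔ ∃ n, HasProjectiveDimensionLE (ModuleCat.of R M) n := by
  have P := projectiveResolution (ModuleCat.of R M)
  refine exists_congr fun n ↦ ?_
  rw [HasProjectiveDimensionLE, hasProjectiveDimensionLT_iff.{u}]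
  refine forall_congr' fun i ↦ forall_congr' fun hi ↦ forall_congr' fun Y ↦ ?_
  obtain ⟨k, rfl⟩ := Nat.exists_eq_succ_of_ne_zero (Nat.ne_zero_of_lt hi)
  rw [isZero_Ext_succ_iff P, ← subsingleton_abelianExt_succ_iff P, subsingleton_iff_forall_eq 0]

lemma HasFinitePD.localizedModule (h : HasFinitePD R M) (S : Submonoid R) :
    HasFinitePD (Localization S) (LocalizedModule S M) := by
  rw [hasFinitePD_iff_exists_hasProjectiveDimensionLE] at h ⊢
  obtain ⟨n, hn⟩ := h
  refine ⟨n, ?_⟩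
  have hle := ModuleCat.localizedModule_hasProjectiveDimensionLE n S (ModuleCat.of R M)
  rw [← projectiveDimension_le_iff] at hle ⊢
  exact (ModuleCat.projectiveDimension_eq_of_linearEquiv (Shrink.linearEquiv _ _)).symm.trans_le
    hle

end FiniteProjectiveDimension

section RegularSequences

open RingTheory.Sequence IsLocalRing Pointwise

section AssociatedPrimes

variable {R M : Type*} [CommRing R] [AddCommGroup M] [Module R M]

lemma torsionBySet_ne_bot_of_mem_associatedPrimes [IsNoetherianRing R] {P : Ideal R}
    (hP : P ∈ associatedPrimes R M) : Submodule.torsionBySet R M P ≠ ⊥ := by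
  obtain ⟨hPprime, y, hy⟩ := isAssociatedPrime_iff.mp hP
  refine (Submodule.ne_bot_iff _).mpr ⟨y, ?_, fun hy0 ↦ hPprime.ne_top ?_⟩
  · rw [Submodule.mem_torsionBySet_iff]
    rintro ⟨a, ha⟩
    rwa [SetLike.mem_coe, hy, Submodule.mem_colon_singleton] at ha
  · rw [hy, hy0, Submodule.colon_singleton_zero]

lemma not_torsionBySet_le_smul_top {s : Set R} {x : R} [IsNoetherian R M]
    (hs : Submodule.torsionBySet R M s ≠ ⊥) (hxJ : x ∈ Ring.jacobson R)
    (hx : IsSMulRegular M x) :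
    ¬ Submodule.torsionBySet R M s ≤ x • (⊤ : Submodule R M) := by
  refine fun h ↦ hs (Submodule.eq_bot_of_le_smul_of_le_jacobson_bot (Ideal.span {x}) _
    (IsNoetherian.noetherian _) (fun t ht ↦ ?_) ?_)
  · obtain ⟨m, -, rfl⟩ := h ht
    rw [Submodule.ideal_span_singleton_smul]
    refine Submodule.smul_mem_pointwise_smul _ _ _ ?_
    simp only [Submodule.mem_torsionBySet_iff, DistribSMul.toLinearMap_apply] at ht ⊢
    exact fun a ↦ hx.right_eq_zero_of_smul (by rw [smul_comm, ht a])
  · rwa [Ideal.span_singleton_le_iff_mem, Ideal.jacobson_bot]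

variable [IsNoetherianRing R] [Module.Finite R M]

lemma exists_le_mem_associatedPrimes_quotSMulTop {P : Ideal R} (hP : P ∈ associatedPrimes R M)
    {x : R} (hxJ : x ∈ Ring.jacobson R) (hx : IsSMulRegular M x) :
    ∃ Q ∈ associatedPrimes R (QuotSMulTop x M), P ≤ Q ∧ x ∈ Q := by
  obtain ⟨t, htP, htx⟩ := Set.not_subset.mp
    (not_torsionBySet_le_smul_top (torsionBySet_ne_bot_of_mem_associatedPrimes hP) hxJ hx)
  have hne : (Submodule.Quotient.mk t : QuotSMulTop x M) ≠ 0 := by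
    rwa [Ne, Submodule.Quotient.mk_eq_zero]
  obtain ⟨Q, hQ, hle⟩ := exists_le_isAssociatedPrime_of_isNoetherianRing R _ hne
  refine ⟨Q, hQ, fun a ha ↦ hle ?_, hle ?_⟩ <;>
    rw [Submodule.mem_colon_singleton, Submodule.mem_bot, ← Submodule.Quotient.mk_smul]
  · rw [(Submodule.mem_torsionBySet_iff _ _).mp htP ⟨a, ha⟩, Submodule.Quotient.mk_zero]
  · rw [Submodule.Quotient.mk_eq_zero]
    exact Submodule.smul_mem_pointwise_smul _ _ _ trivial

lemma length_le_ringKrullDim_quotient_of_mem_associatedPrimes {P : Ideal R}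
    (hP : P ∈ associatedPrimes R M) {rs : List R} (hmem : ∀ r ∈ rs, r ∈ Ring.jacobson R)
    (hreg : IsWeaklyRegular M rs) : (rs.length : WithBot ℕ∞) ≤ ringKrullDim (R ⧸ P) := by
  induction rs generalizing M P with
  | nil =>
    have := hP.isPrime
    simpa using ringKrullDim_nonneg_of_nontrivial
  | cons x rs ih =>
    have := hP.isPrime
    rw [isWeaklyRegular_cons_iff] at hreg
    rw [List.forall_mem_cons] at hmem
    obtain ⟨Q, hQ, hPQ, hxQ⟩ := exists_le_mem_associatedPrimes_quotSMulTop hP hmem.1 hreg.1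
    have hxP : x ∉ P := fun h ↦ by
      have hmem : x ∈ ⋃ p ∈ associatedPrimes R M, (p : Set R) := Set.mem_biUnion hP h
      rw [biUnion_associatedPrimes_eq_compl_regular] at hmem
      exact hmem hreg.1
    have hsucc : ringKrullDim (R ⧸ Q) + 1 ≤ ringKrullDim (R ⧸ P) :=
      ringKrullDim_succ_le_of_surjective (Ideal.Quotient.factor hPQ)
        (Ideal.Quotient.factor_surjective hPQ) (r := Ideal.Quotient.mk P x)
        (by rwa [mem_nonZeroDivisors_iff_ne_zero, Ne, Ideal.Quotient.eq_zero_iff_mem])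
        (by rwa [Ideal.Quotient.factor_mk, Ideal.Quotient.eq_zero_iff_mem])
    refine le_trans ?_ hsucc
    push_cast [List.length_cons]
    gcongr
    exact ih hQ hmem.2 hreg.2

end AssociatedPrimes

end RegularSequences

section Depth

open RingTheory.Sequence IsLocalRing

lemma maximalIdeal_smul_top_lt_top {R : Type*} (M : Type*) [CommRing R] [IsLocalRing R]
    [AddCommGroup M] [Module R M] [Module.Finite R M] [Nontrivial M] :
    maximalIdeal R • (⊤ : Submodule R M) < ⊤ :=
  (Submodule.top_ne_ideal_smul_of_le_jacobson_annihilator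
    (maximalIdeal_le_jacobson (Module.annihilator R M))).symm.lt_top

variable {R : Type u} [CommRing R] [IsLocalRing R] {M : Type u} [AddCommGroup M] [Module R M]

lemma length_le_moduleDepth {rs : List R} (hmem : ∀ x ∈ rs, x ∈ maximalIdeal R)
    (hreg : IsRegular M rs) : (rs.length : ℕ∞) ≤ moduleDepth R M :=
  le_sSup ⟨rs, rfl, hmem, hreg⟩

variable [IsNoetherianRing R] [Module.Finite R M]

section Nontrivial

variable [Nontrivial M]

lemma natCast_le_moduleDepth_iff_subsingleton_ext {n : ℕ} :
    n ≤ moduleDepth R M ↔ ∀ i < n, Subsingleton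
      (Abelian.Ext (ModuleCat.of R (R ⧸ maximalIdeal R)) (ModuleCat.of R M) i) := by
  have hsupp : Module.support R (R ⧸ maximalIdeal R) =
      PrimeSpectrum.zeroLocus (maximalIdeal R : Set R) := by
    rw [Module.support_eq_zeroLocus, Ideal.annihilator_quotient]
  refine ⟨fun hn i hi ↦ ?_, fun h ↦ ?_⟩
  · obtain ⟨_, ⟨rs, rfl, hmem, hreg⟩, hlt⟩ :=
      lt_sSup_iff.mp ((Nat.cast_lt.mpr hi).trans_le hn)
    exact ModuleCat.subsingleton_ext_of_exists_isRegular (maximalIdeal R)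
      (ModuleCat.of R (R ⧸ maximalIdeal R)) hsupp.subset (ModuleCat.of R M)
      (maximalIdeal_smul_top_lt_top M) rs hmem hreg i (Nat.cast_lt.mp hlt)
  · obtain ⟨rs, rfl, hmem, hreg⟩ := ModuleCat.exists_isRegular_of_exists_subsingleton_ext
      (maximalIdeal R) n (ModuleCat.of R M) (maximalIdeal_smul_top_lt_top M)
      (ModuleCat.of R (R ⧸ maximalIdeal R)) hsupp h
    exact length_le_moduleDepth hmem hreg

lemma natCast_le_moduleDepth_quotSMulTop {x : R} (hxm : x ∈ maximalIdeal R)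
    (hx : IsSMulRegular M x) {n : ℕ} (hn : (n + 1 : ℕ) ≤ moduleDepth R M) :
    n ≤ moduleDepth R (QuotSMulTop x M) := by
  have : Nontrivial (QuotSMulTop x M) := nontrivial_quotSMulTop_of_mem_maximalIdeal M hxm
  rw [natCast_le_moduleDepth_iff_subsingleton_ext] at hn ⊢
  intro i hi
  have hx' : IsSMulRegular (ModuleCat.of R M) x := hx
  have hext := AddCommGrpCat.isZero_of_iff_subsingleton.mpr (hn i (by lia))
  have hext_succ := AddCommGrpCat.isZero_of_iff_subsingleton.mpr (hn (i + 1) (by lia))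
  exact AddCommGrpCat.subsingleton_of_isZero <| ShortComplex.Exact.isZero_of_both_zeros
    (Abelian.Ext.covariant_sequence_exact₃' (ModuleCat.of R (R ⧸ maximalIdeal R))
      hx'.smulShortComplex_shortExact i (i + 1) rfl)
    (hext.eq_zero_of_src _) (hext_succ.eq_zero_of_tgt _)

end Nontrivial

lemma moduleDepth_le_ringKrullDim_quotient_of_mem_associatedPrimes {P : Ideal R}
    (hP : P ∈ associatedPrimes R M) : (moduleDepth R M : WithBot ℕ∞) ≤ ringKrullDim (R ⧸ P) := by
  have := hP.isPrime
  obtain ⟨d, hd⟩ := WithBot.ne_bot_iff_exists.mp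
    (show ringKrullDim (R ⧸ P) ≠ ⊥ from Order.krullDim_ne_bot_iff.mpr inferInstance)
  rw [← hd, WithBot.coe_le_coe]
  refine sSup_le ?_
  rintro _ ⟨rs, rfl, hmem, hreg⟩
  rw [← WithBot.coe_le_coe, hd]
  exact length_le_ringKrullDim_quotient_of_mem_associatedPrimes hP
    (by rwa [ringJacobson_eq_maximalIdeal]) hreg.toIsWeaklyRegular

lemma moduleDepth_le_supportDim [Nontrivial M] :
    (moduleDepth R M : WithBot ℕ∞) ≤ Module.supportDim R M := by
  obtain ⟨P, hP⟩ := associatedPrimes.nonempty R M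
  obtain ⟨f, hf⟩ := (isAssociatedPrime_iff_exists_injective_linearMap P M).mp hP |>.2
  calc (moduleDepth R M : WithBot ℕ∞) ≤ ringKrullDim (R ⧸ P) :=
        moduleDepth_le_ringKrullDim_quotient_of_mem_associatedPrimes hP
    _ = Module.supportDim R (R ⧸ P) := (Module.supportDim_quotient_eq_ringKrullDim P).symm
    _ ≤ Module.supportDim R M := Module.supportDim_le_of_injective f hf

lemma moduleDepth_le_ringKrullDim [Nontrivial M] :
    (moduleDepth R M : WithBot ℕ∞) ≤ ringKrullDim R :=
  moduleDepth_le_supportDim.trans (Module.supportDim_le_ringKrullDim R M)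

lemma moduleDepth_localization_le_height {R : Type u} [CommRing R] [IsNoetherianRing R]
    (p : Ideal R) [p.IsPrime] :
    (moduleDepth (Localization.AtPrime p) (Localization.AtPrime p) : WithBot ℕ∞) ≤ p.height := by
  rw [← IsLocalization.AtPrime.ringKrullDim_eq_height p (Localization.AtPrime p)]
  exact moduleDepth_le_ringKrullDim

lemma exists_isWeaklyRegular_le_length_add_ringKrullDim_quotient [Nontrivial M] {I : Ideal R}
    (hI : I ≠ ⊤) {n : ℕ} (hn : n ≤ moduleDepth R M) :
    ∃ xs : List R, (∀ x ∈ xs, x ∈ I) ∧ IsWeaklyRegular M xs ∧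
      (n : WithBot ℕ∞) ≤ xs.length + ringKrullDim (R ⧸ I) := by
  induction n generalizing M with
  | zero =>
    have := Ideal.Quotient.nontrivial_iff.mpr hI
    exact ⟨[], by simp, by simp, by simpa using ringKrullDim_nonneg_of_nontrivial⟩
  | succ n ih =>
    by_cases h : ∃ x ∈ I, IsSMulRegular M x
    · obtain ⟨x, hxI, hx⟩ := h
      have hxm : x ∈ maximalIdeal R := le_maximalIdeal hI hxI
      have : Nontrivial (QuotSMulTop x M) := nontrivial_quotSMulTop_of_mem_maximalIdeal M hxm
      obtain ⟨xs, hxs, hreg, hle⟩ := ih (natCast_le_moduleDepth_quotSMulTop hxm hx hn)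
      refine ⟨x :: xs, by simpa using ⟨hxI, hxs⟩, by simpa using ⟨hx, hreg⟩, ?_⟩
      push_cast [List.length_cons]
      rw [add_right_comm]
      gcongr
    · push Not at h
      have hsub : (I : Set R) ⊆ ⋃ P ∈ associatedPrimes R M, (P : Set R) := by
        rwa [biUnion_associatedPrimes_eq_compl_regular]
      obtain ⟨P, hP, hIP⟩ := (Ideal.subset_union_prime_finite
        (associatedPrimes.finite R M) (f := id) 0 0 (fun P hP _ _ ↦ hP.isPrime)).mp hsub
      refine ⟨[], by simp, by simp, ?_⟩
      calc ((n + 1 : ℕ) : WithBot ℕ∞) ≤ moduleDepth R M := WithBot.coe_le_coe.mpr hn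
        _ ≤ ringKrullDim (R ⧸ P) :=
          moduleDepth_le_ringKrullDim_quotient_of_mem_associatedPrimes hP
        _ ≤ ringKrullDim (R ⧸ I) :=
          ringKrullDim_le_of_surjective _ (Ideal.Quotient.factor_surjective hIP)
        _ = _ := by simp

lemma moduleDepth_le_moduleDepth_add_ringKrullDim_quotient {S N : Type u}
    [CommRing S] [IsLocalRing S] [Algebra R S] [AddCommGroup N] [Module R N] [Module S N]
    [IsScalarTower R S N] [Nontrivial N] [Module.Finite S N] (p : Ideal R) [p.IsPrime]
    [IsLocalization.AtPrime S p] (f : M →ₗ[R] N) [IsLocalizedModule.AtPrime p f] :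
    (moduleDepth R M : WithBot ℕ∞) ≤ moduleDepth S N + ringKrullDim (R ⧸ p) := by
  have : Nontrivial M := by
    by_contra hM
    rw [not_nontrivial_iff_subsingleton] at hM
    exact not_subsingleton N (IsLocalizedModule.subsingleton_of_subsingleton p.primeCompl f)
  obtain ⟨c, hc⟩ := WithBot.ne_bot_iff_exists.mp
    (show ringKrullDim (R ⧸ p) ≠ ⊥ from Order.krullDim_ne_bot_iff.mpr inferInstance)
  rw [← hc, ← WithBot.coe_add, WithBot.coe_le_coe, ← ENat.forall_natCast_le_iff_le]
  intro n hn
  obtain ⟨xs, hxs, hreg, hle⟩ :=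
    exists_isWeaklyRegular_le_length_add_ringKrullDim_quotient ‹p.IsPrime›.ne_top hn
  have hlen : (xs.length : ℕ∞) ≤ moduleDepth S N := by
    rw [← List.length_map (algebraMap R S)]
    refine length_le_moduleDepth ?_ (hreg.isRegular_of_isLocalizedModule_of_mem S p f hxs)
    simpa only [List.forall_mem_map, IsLocalization.AtPrime.to_map_mem_maximal_iff S p] using hxs
  rw [← hc] at hle
  exact (WithBot.coe_le_coe.mp hle).trans (add_le_add_left hlen c)

end Depth

lemma height_add_ringKrullDim_quotient_le {R : Type*} [CommRing R] (p : Ideal R) [hp : p.IsPrime] :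
    p.height + ringKrullDim (R ⧸ p) ≤ ringKrullDim R := by
  let P : PrimeSpectrum R := ⟨p, hp⟩
  have : Nonempty (PrimeSpectrum R) := ⟨P⟩
  have hcoheight : ringKrullDim (R ⧸ p) = Order.coheight P := by
    rw [ringKrullDim_quotient, Order.coheight_eq_krullDim_Ici]
    rfl
  have hheight : p.height = Order.height P := P.height_eq_orderHeight
  rw [hcoheight, hheight, ringKrullDim, Order.krullDim_eq_iSup_height_add_coheight_of_nonempty,
    ← WithBot.coe_add, WithBot.coe_le_coe]
  exact le_iSup (fun a : PrimeSpectrum R ↦ Order.height a + Order.coheight a) P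

lemma add_ringKrullDim_le_add_ringKrullDim_iff (R : Type*) [CommRing R] [FiniteRingKrullDim R]
    {a b : WithBot ℕ∞} : a + ringKrullDim R ≤ b + ringKrullDim R ↔ a ≤ b := by
  rw [ringKrullDim, Order.krullDim_eq_length_of_finiteDimensionalOrder]
  exact ENat.WithBot.add_le_add_natCast_right_iff

section CohenMacaulay

open IsLocalRing

/-- A local ring is Cohen–Macaulay if its depth equals its Krull dimension. -/
def IsCohenMacaulayLocalRing (R : Type u) [CommRing R] [IsLocalRing R] : Prop :=
  (moduleDepth R R : WithBot ℕ∞) = ringKrullDim R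

namespace IsCohenMacaulayLocalRing

variable {R : Type u} [CommRing R] [IsLocalRing R] [IsNoetherianRing R]

lemma ringKrullDim_le_moduleDepth_add_ringKrullDim_quotient (hR : IsCohenMacaulayLocalRing R)
    (p : Ideal R) [p.IsPrime] :
    ringKrullDim R ≤ moduleDepth (Localization.AtPrime p) (Localization.AtPrime p) +
      ringKrullDim (R ⧸ p) :=
  hR.symm.trans_le (moduleDepth_le_moduleDepth_add_ringKrullDim_quotient p
    (Algebra.linearMap R (Localization.AtPrime p)))

lemma height_add_ringKrullDim_quotient (hR : IsCohenMacaulayLocalRing R) (p : Ideal R)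
    [p.IsPrime] : p.height + ringKrullDim (R ⧸ p) = ringKrullDim R := by
  refine (height_add_ringKrullDim_quotient_le p).antisymm ?_
  grw [hR.ringKrullDim_le_moduleDepth_add_ringKrullDim_quotient p,
    moduleDepth_localization_le_height p]

lemma localization_atPrime (hR : IsCohenMacaulayLocalRing R) (p : Ideal R) [p.IsPrime] :
    IsCohenMacaulayLocalRing (Localization.AtPrime p) := by
  have : IsLocalRing (R ⧸ p) :=
    .of_surjective' (Ideal.Quotient.mk p) Ideal.Quotient.mk_surjective
  rw [IsCohenMacaulayLocalRing, IsLocalization.AtPrime.ringKrullDim_eq_height p]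
  refine (moduleDepth_localization_le_height p).antisymm ?_
  rw [← add_ringKrullDim_le_add_ringKrullDim_iff (R ⧸ p), hR.height_add_ringKrullDim_quotient p]
  exact hR.ringKrullDim_le_moduleDepth_add_ringKrullDim_quotient p

variable {M : Type u} [AddCommGroup M] [Module R M] [Module.Finite R M] [Nontrivial M]

lemma moduleDepth_le_moduleDepth_self (hR : IsCohenMacaulayLocalRing R) :
    moduleDepth R M ≤ moduleDepth R R := by
  rw [← WithBot.coe_le_coe, hR]
  exact moduleDepth_le_ringKrullDim

lemma moduleDepth_self_ne_top (hR : IsCohenMacaulayLocalRing R) : moduleDepth R R ≠ ⊤ :=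
  fun h ↦ ringKrullDim_ne_top (R := R) (hR.symm.trans (congrArg _ h))

lemma moduleDepth_le_of_depthFormula (hR : IsCohenMacaulayLocalRing R) {N T : Type u}
    [AddCommGroup N] [Module R N] [AddCommGroup T] [Module R T]
    (h : moduleDepth R M + moduleDepth R N = moduleDepth R R + moduleDepth R T) :
    moduleDepth R T ≤ moduleDepth R N := by
  rw [← ENat.add_le_add_iff_left hR.moduleDepth_self_ne_top, ← h]
  exact add_le_add_left hR.moduleDepth_le_moduleDepth_self _

end IsCohenMacaulayLocalRing

end CohenMacaulay

section Support

open IsLocalRing PrimeSpectrum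

variable {R : Type*} [CommRing R]

lemma support_tensorProduct_eq_inter (M N : Type*) [AddCommGroup M] [Module R M]
    [AddCommGroup N] [Module R N] [Module.Finite R M] [Module.Finite R N] :
    Module.support R (M ⊗[R] N) = Module.support R M ∩ Module.support R N := by
  ext p
  let K := p.asIdeal.ResidueField
  simp only [Set.mem_inter_iff, Module.mem_support_iff_nontrivial_residueField_tensorProduct]
  rw [(TensorProduct.AlgebraTensorModule.distribBaseChange R K M N).nontrivial_congr]
  refine ⟨fun h ↦ ⟨?_, ?_⟩, fun ⟨_, _⟩ ↦ inferInstance⟩ <;> contrapose! h <;> infer_instance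

lemma support_localizedModule_eq_preimage (S : Submonoid R) (M : Type*) [AddCommGroup M]
    [Module R M] :
    Module.support (Localization S) (LocalizedModule S M) =
      comap (algebraMap R (Localization S)) ⁻¹' Module.support R M := by
  ext P
  rw [Set.mem_preimage, Module.mem_support_iff', Module.mem_support_iff']
  constructor
  · rintro ⟨y, hy⟩
    induction y using LocalizedModule.induction_on with
    | _ m s =>
      refine ⟨m, fun r hr h0 ↦ hy (algebraMap R _ r) hr ?_⟩
      rw [algebraMap_smul, LocalizedModule.smul'_mk, h0, LocalizedModule.zero_mk]
  · rintro ⟨m, hm⟩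
    refine ⟨LocalizedModule.mk m 1, fun z hz h0 ↦ ?_⟩
    obtain ⟨r, s, rfl⟩ := IsLocalization.exists_mk'_eq S z
    rw [← Localization.mk_eq_mk', LocalizedModule.mk_smul_mk, ← LocalizedModule.zero_mk 1,
      LocalizedModule.mk_eq] at h0
    obtain ⟨c, hc⟩ := h0
    refine hm (c * r) (fun hcr ↦ ?_) (by simpa [mul_smul, Submonoid.smul_def] using hc)
    rw [comap_asIdeal, Ideal.mem_comap, map_mul,
      P.asIdeal.unit_mul_mem_iff_mem (IsLocalization.map_units _ c)] at hcr
    exact hz (by rwa [IsLocalization.mk'_mem_iff])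

lemma isFiniteLength_of_forall_mem_support_isMaximal [IsNoetherianRing R] {M : Type*}
    [AddCommGroup M] [Module R M] [hM : Module.Finite R M]
    (h : ∀ P ∈ Module.support R M, P.asIdeal.IsMaximal) : IsFiniteLength R M := by
  rw [← Module.length_ne_top_iff]
  induction hM using IsNoetherianRing.induction_on_isQuotientEquivQuotientPrime R with
  | subsingleton N => simp
  | quotient N p e =>
    have hp : p.asIdeal.IsMaximal := h p (by
      rw [e.support_eq, Module.mem_support_iff_of_finite, Ideal.annihilator_quotient])
    have : IsSimpleModule R N := isSimpleModule_iff_quot_maximal.mpr ⟨_, hp, ⟨e⟩⟩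
    simp
  | exact N₁ N₂ N₃ f g hf hg hfg h₁ h₃ =>
    rw [Module.support_of_exact hfg hf hg] at h
    rw [Module.length_eq_add_of_exact f g hf hg hfg]
    exact WithTop.add_ne_top.mpr
      ⟨h₁ fun P hP ↦ h P (.inl hP), h₃ fun P hP ↦ h P (.inr hP)⟩

lemma preimage_comap_subset_closedPoint_of_minimal {Z : Set (PrimeSpectrum R)}
    {Q : PrimeSpectrum R} (hQ : Minimal (· ∈ Z) Q) (S : Type*) [CommRing S] [IsLocalRing S]
    [Algebra R S] [IsLocalization.AtPrime S Q.asIdeal] :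
    comap (algebraMap R S) ⁻¹' Z ⊆ {closedPoint S} := by
  intro P hP
  have hclosed : comap (algebraMap R S) (closedPoint S) = Q :=
    PrimeSpectrum.ext (IsLocalization.AtPrime.under_maximalIdeal S Q.asIdeal)
  have hle : comap (algebraMap R S) P ≤ comap (algebraMap R S) (closedPoint S) :=
    Ideal.comap_mono (le_maximalIdeal P.isPrime.ne_top)
  exact localization_comap_injective S Q.asIdeal.primeCompl
    ((hQ.eq_of_le hP (hle.trans_eq hclosed)).trans hclosed.symm)

lemma supportDim_localizedModule_congr {M N : Type*} [AddCommGroup M] [Module R M]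
    [AddCommGroup N] [Module R N] (h : Module.support R M = Module.support R N)
    (S : Submonoid R) :
    Module.supportDim (Localization S) (LocalizedModule S M) =
      Module.supportDim (Localization S) (LocalizedModule S N) := by
  rw [Module.supportDim, Module.supportDim, support_localizedModule_eq_preimage,
    support_localizedModule_eq_preimage, h]

lemma exists_minimal_mem_support_inter_zeroLocus [IsLocalRing R] [IsNoetherianRing R]
    (N : Type*) [AddCommGroup N] [Module R N] [Module.Finite R N] [Nontrivial N] {I : Ideal R}
    (hI : I ≠ ⊤) : ∃ Q, Minimal (· ∈ Module.support R N ∩ zeroLocus (I : Set R)) Q := by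
  have : WellFoundedLT (PrimeSpectrum R) :=
    ⟨SetRel.IsWellFounded.of_finiteDimensional
      {(a, b) : PrimeSpectrum R × PrimeSpectrum R | a < b}⟩
  exact exists_minimal_of_wellFoundedLT _
    ⟨closedPoint R, closedPoint_mem_support R N, le_maximalIdeal hI⟩

end Support

section DimensionInequality

open IsLocalRing PrimeSpectrum

/-- The property (DI) of a ring `R`: the dimension inequality `dim A + dim B ≤ dim R` for nonzero
finitely generated modules `A` and `B` such that `B` has finite projective dimension and `A ⊗ B`
has finite length. -/
def DimensionInequality (R : Type u) [CommRing R] : Prop :=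
  ∀ (A B : Type u) [AddCommGroup A] [Module R A] [AddCommGroup B] [Module R B]
    [Module.Finite R A] [Module.Finite R B] [Nontrivial A] [Nontrivial B],
    HasFinitePD R B → IsFiniteLength R (A ⊗[R] B) → moduleDim R A + moduleDim R B ≤ ringDim R

lemma moduleDim_eq_supportDim (R : Type u) [CommRing R] (M : Type u) [AddCommGroup M]
    [Module R M] [Module.Finite R M] : moduleDim R M = Module.supportDim R M :=
  (Module.supportDim_eq_ringKrullDim_quotient_annihilator R M).symm

variable {R : Type u} [CommRing R] [IsNoetherianRing R]

lemma DimensionInequality.supportDim_le_height [IsLocalRing R] (hDI : DimensionInequality R)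
    (hR : IsCohenMacaulayLocalRing R) (p : Ideal R) [p.IsPrime] {B : Type u} [AddCommGroup B]
    [Module R B] [Module.Finite R B] [Nontrivial B] (hB : HasFinitePD R B)
    (hp : Module.support R B ∩ zeroLocus p ⊆ {closedPoint R}) :
    Module.supportDim R B ≤ p.height := by
  have : IsLocalRing (R ⧸ p) :=
    .of_surjective' (Ideal.Quotient.mk p) Ideal.Quotient.mk_surjective
  have hfinite : IsFiniteLength R ((R ⧸ p) ⊗[R] B) := by
    refine isFiniteLength_of_forall_mem_support_isMaximal fun P hP ↦ ?_
    rw [(TensorProduct.quotTensorEquivQuotSMul B p).support_eq, Module.support_quotient] at hP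
    rw [hp hP]
    exact maximalIdeal.isMaximal R
  have hdim := hDI (R ⧸ p) B hB hfinite
  rwa [moduleDim_eq_supportDim, moduleDim_eq_supportDim,
    Module.supportDim_quotient_eq_ringKrullDim, ringDim, ← hR.height_add_ringKrullDim_quotient p,
    add_comm, add_ringKrullDim_le_add_ringKrullDim_iff] at hdim

lemma DimensionInequality.supportDim_localizedModule_le_height {p Q : PrimeSpectrum R}
    (hDI : DimensionInequality (Localization.AtPrime Q.asIdeal))
    (hR : IsCohenMacaulayLocalRing (Localization.AtPrime Q.asIdeal)) {L : Type u} [AddCommGroup L]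
    [Module R L] [Module.Finite R L] (hL : HasFinitePD R L)
    (hQ : Minimal (· ∈ Module.support R L ∩ zeroLocus p.asIdeal) Q) :
    Module.supportDim (Localization.AtPrime Q.asIdeal)
      (LocalizedModule Q.asIdeal.primeCompl L) ≤ Order.height p := by
  have hpQ : p.asIdeal ≤ Q.asIdeal := hQ.prop.2
  have hdisj : Disjoint (Q.asIdeal.primeCompl : Set R) (p.asIdeal : Set R) :=
    Set.disjoint_left.mpr fun _ hxQ hxp ↦ hxQ (hpQ hxp)
  have : Nontrivial (LocalizedModule Q.asIdeal.primeCompl L) := hQ.prop.1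
  have := Ideal.isPrime_map_of_isLocalizationAtPrime (S := Localization.AtPrime Q.asIdeal) _ hpQ
  rw [← p.height_eq_orderHeight, ← IsLocalization.height_map_of_disjoint
    (S := Localization.AtPrime Q.asIdeal) Q.asIdeal.primeCompl p.asIdeal hdisj]
  refine hDI.supportDim_le_height hR _ (hL.localizedModule _)
    (subset_trans ?_ (preimage_comap_subset_closedPoint_of_minimal hQ _))
  rw [support_localizedModule_eq_preimage, Set.preimage_inter, preimage_comap_zeroLocus,
    Ideal.map, zeroLocus_span]

lemma DimensionInequality.moduleDepth_localizedModule_le_height {p Q : PrimeSpectrum R}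
    (hDI : DimensionInequality (Localization.AtPrime Q.asIdeal))
    (hR : IsCohenMacaulayLocalRing (Localization.AtPrime Q.asIdeal)) {L N : Type u}
    [AddCommGroup L] [Module R L] [Module.Finite R L] [AddCommGroup N] [Module R N]
    [Module.Finite R N] (hL : HasFinitePD R L) (hLN : Module.support R L = Module.support R N)
    (hQ : Minimal (· ∈ Module.support R N ∩ zeroLocus p.asIdeal) Q) :
    moduleDepth (Localization.AtPrime Q.asIdeal) (LocalizedModule Q.asIdeal.primeCompl N) ≤
      Order.height p := by
  have : Nontrivial (LocalizedModule Q.asIdeal.primeCompl N) := hQ.prop.1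
  rw [← WithBot.coe_le_coe]
  refine moduleDepth_le_supportDim.trans ?_
  rw [← supportDim_localizedModule_congr hLN]
  exact hDI.supportDim_localizedModule_le_height hR hL (by rwa [hLN])

end DimensionInequality

theorem stmt_18 (R : Type u) [CommRing R] [IsLocalRing R] [IsNoetherianRing R]
    (hCM : (moduleDepth R R : WithBot ℕ∞) = ringDim R)
    (M N : Type u) [AddCommGroup M] [Module R M] [AddCommGroup N] [Module R N]
    [Module.Finite R M] [Module.Finite R N] [Nontrivial N]
    (n : ℕ)
    (hdepthformula : ∀ q ∈ Module.support R (M ⊗[R] N),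
      moduleDepth (Localization.AtPrime q.asIdeal)
          (LocalizedModule q.asIdeal.primeCompl M) +
        moduleDepth (Localization.AtPrime q.asIdeal)
          (LocalizedModule q.asIdeal.primeCompl N) =
      moduleDepth (Localization.AtPrime q.asIdeal) (Localization.AtPrime q.asIdeal) +
        moduleDepth (Localization.AtPrime q.asIdeal)
          (LocalizedModule q.asIdeal.primeCompl (M ⊗[R] N)))
    (hDIloc : ∀ (q : Ideal R) [q.IsPrime],
      ∀ (A B : Type u) [AddCommGroup A] [Module (Localization.AtPrime q) A]
        [AddCommGroup B] [Module (Localization.AtPrime q) B]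
        [Module.Finite (Localization.AtPrime q) A] [Module.Finite (Localization.AtPrime q) B]
        [Nontrivial A] [Nontrivial B],
        HasFinitePD (Localization.AtPrime q) B →
        IsFiniteLength (Localization.AtPrime q) (A ⊗[Localization.AtPrime q] B) →
        moduleDim (Localization.AtPrime q) A + moduleDim (Localization.AtPrime q) B ≤
          ringDim (Localization.AtPrime q))
    (hL : ∃ (L : Type u) (_ : AddCommGroup L) (_ : Module R L),
      Module.Finite R L ∧ HasFinitePD R L ∧ Module.support R L = Module.support R N)
    (hSn : ∀ p ∈ Module.support R (M ⊗[R] N),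
      min (n : ℕ∞) (Order.height p) ≤
        moduleDepth (Localization.AtPrime p.asIdeal)
          (LocalizedModule p.asIdeal.primeCompl (M ⊗[R] N))) :
    ∀ p ∈ Module.support R M, Order.height p < (n : ℕ∞) → p ∈ Module.support R N := by
  intro p hpM hpn
  by_contra hpN
  obtain ⟨L, _, _, _, hLpd, hLN⟩ := hL
  obtain ⟨Q, hQ⟩ := exists_minimal_mem_support_inter_zeroLocus N p.isPrime.ne_top
  obtain ⟨hQN, hpQ⟩ := hQ.prop
  have hQM : Q ∈ Module.support R M := Module.mem_support_mono hpQ hpM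
  have hQT : Q ∈ Module.support R (M ⊗[R] N) := by
    rwa [support_tensorProduct_eq_inter, Set.mem_inter_iff, and_iff_left hQN]
  have hlt : p < Q := lt_of_le_of_ne hpQ fun h ↦ hpN (h ▸ hQN)
  have : Nontrivial (LocalizedModule Q.asIdeal.primeCompl M) := hQM
  have hCMQ := IsCohenMacaulayLocalRing.localization_atPrime hCM Q.asIdeal
  have hDIQ : DimensionInequality (Localization.AtPrime Q.asIdeal) := hDIloc Q.asIdeal
  have hmin : min (n : ℕ∞) (Order.height Q) ≤ Order.height p :=
    calc
      _ ≤ moduleDepth (Localization.AtPrime Q.asIdeal)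
          (LocalizedModule Q.asIdeal.primeCompl (M ⊗[R] N)) := hSn Q hQT
      _ ≤ moduleDepth (Localization.AtPrime Q.asIdeal)
          (LocalizedModule Q.asIdeal.primeCompl N) :=
        hCMQ.moduleDepth_le_of_depthFormula (hdepthformula Q hQT)
      _ ≤ Order.height p := hDIQ.moduleDepth_localizedModule_le_height hCMQ hLpd hLN hQ
  have hheight : Order.height p < Order.height Q :=
    Order.height_strictMono hlt (hpn.trans (ENat.natCast_lt_top n))
  exact hmin.not_gt (lt_min hpn hheight)
end

section
/- Let (R,m,k) be a Noetherian local ring with residue field k, and let M and N be finitely generated R-modules. For each n ≥ 0, Σ_{i+j=n} β_i(M)·β_j(N) ≤ Σ_{i+j=n} β_j(Tor_i^R(M,N)), where β_i(X) = dim_k Tor_i^R(X,k) denotes the i-th Betti number of a finitely generated R-module X. -/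
/-!
STATEMENT 19: Let `(R, m, k)` be a Noetherian local ring and `M`, `N` finitely generated
`R`-modules. For every `n`, `Σ_{i+j=n} βᵢ(M)·βⱼ(N) ≤ Σ_{i+j=n} βⱼ(Tor_i^R(M, N))`, where
`βᵢ(X) = dim_k Tor_i^R(X, k)`.

Since `Tor_i^R(X, k)` is a vector space over the residue field `k`, its `k`-dimension coincides
with its length as an `R`-module, which we use to express `dim_k` (`Order.height ⊤` in the
submodule lattice is the length of a module, as in Mathlib's `Module.length`).
-/

open CategoryTheory CategoryTheory.Limits

universe u

/-- The length of a module, as the height of `⊤` in its submodule lattice. -/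
noncomputable def lengthOf (R : Type u) [CommRing R] (X : ModuleCat.{u} R) : ℕ∞ :=
  Order.height (⊤ : Submodule R X)

/-- The `i`-th Betti number of a module `X` over a Noetherian local ring `(R, m, k)`:
`βᵢ(X) = dim_k Tor_i^R(X, k)`, expressed as the length of the `R`-module `Tor_i^R(X, k)`
(which is a `k`-vector space, so its length equals its `k`-dimension). -/
noncomputable def betti (R : Type u) [CommRing R] [IsLocalRing R] (i : ℕ)
    (X : ModuleCat.{u} R) : ℕ∞ :=
  lengthOf R (((Tor (ModuleCat.{u} R) i).obj X).obj
    (ModuleCat.of R (IsLocalRing.ResidueField R)))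

/-!
Let `P` and `Q` be projective resolutions of `M` and `N`, let `T` be the total complex of the
double complex `P_p ⊗ Q_q`, and let `k = R ⧸ m`. Then `T` is a complex of flat modules with
`H_i(T) = Tor_i(M, N)`, and the length of `H_n(k ⊗ T)` lies between the two sides. From below,
`k ⊗ T` is the total complex of `(k ⊗ P_p) ⊗ (k ⊗ Q_q)`, so over the field `k` its homology
contains the products of the classes in `H_i(k ⊗ P) = Tor_i(M, k)` and
`H_j(k ⊗ Q) = Tor_j(N, k)`. From above, shifting dimensions along the flat terms of `T` bounds it
by the lengths of `Tor_{n-i}(H_i(T), k)`.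
-/

open MonoidalCategory TensorProduct
open Finset.HasAntidiagonal (antidiagonal mem_antidiagonal)

section Length

variable {R M N P : Type*} [Ring R] [AddCommGroup M] [AddCommGroup N] [AddCommGroup P]
  [Module R M] [Module R N] [Module R P]

lemma length_ker_le_of_exact {f : M →ₗ[R] N} {g : N →ₗ[R] P} (h : Function.Exact f g) :
    Module.length R (LinearMap.ker g) ≤ Module.length R M := by
  rw [LinearMap.exact_iff.mp h]
  exact Module.length_le_of_surjective f.rangeRestrict f.surjective_rangeRestrict

lemma length_ker_eq_of_exact {f : M →ₗ[R] N} {g : N →ₗ[R] P} (hf : Function.Injective f)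
    (h : Function.Exact f g) : Module.length R (LinearMap.ker g) = Module.length R M := by
  rw [LinearMap.exact_iff.mp h]
  exact (LinearEquiv.ofInjective f hf).length_eq.symm

lemma length_ker_congr {M' N' : Type*} [AddCommGroup M'] [AddCommGroup N'] [Module R M']
    [Module R N'] {f : M →ₗ[R] N} {g : M' →ₗ[R] N'} (e : M ≃ₗ[R] M') (e' : N ≃ₗ[R] N')
    (h : e'.toLinearMap ∘ₗ f = g ∘ₗ e.toLinearMap) :
    Module.length R (LinearMap.ker f) = Module.length R (LinearMap.ker g) := by
  refine (e.ofSubmodules _ _ ?_).length_eq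
  rw [← LinearEquiv.ker_comp (e'' := e') f, h]
  ext y
  simp

lemma length_le_length_ker_add (f : M →ₗ[R] N) :
    Module.length R M ≤ Module.length R (LinearMap.ker f) + Module.length R N := by
  rw [Module.length_eq_add_of_exact (LinearMap.ker f).subtype f.rangeRestrict
    (Submodule.subtype_injective _) f.surjective_rangeRestrict (by rw [LinearMap.exact_iff]; simp)]
  exact add_le_add le_rfl
    (Module.length_le_of_injective _ (Submodule.subtype_injective (LinearMap.range f)))

lemma length_ker_comp_le (f : M →ₗ[R] N) (g : N →ₗ[R] P) :
    Module.length R (LinearMap.ker (g ∘ₗ f)) ≤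
      Module.length R (LinearMap.ker f) + Module.length R (LinearMap.ker g) := by
  let φ : LinearMap.ker (g ∘ₗ f) →ₗ[R] LinearMap.ker g :=
    f.restrict fun _ hx ↦ hx
  refine (length_le_length_ker_add φ).trans (add_le_add ?_ le_rfl)
  let ψ : LinearMap.ker φ →ₗ[R] LinearMap.ker f :=
    (LinearMap.ker (g ∘ₗ f)).subtype.restrict fun _ hx ↦ congrArg Subtype.val hx
  exact Module.length_le_of_injective ψ fun x y hxy ↦
    Subtype.ext (Subtype.ext (congrArg Subtype.val hxy :))

end Length

section TorLES

variable {R : Type u} [CommRing R]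

/-- The complex `X ⊗ C`. -/
noncomputable abbrev tensorComplex (X : ModuleCat.{u} R) (C : ChainComplex (ModuleCat.{u} R) ℕ) :
    ChainComplex (ModuleCat.{u} R) ℕ :=
  (((tensoringLeft (ModuleCat.{u} R)).obj X).mapHomologicalComplex _).obj C

/-- The map of complexes `X ⊗ C ⟶ Y ⊗ C` induced by `f : X ⟶ Y`. -/
noncomputable abbrev tensorComplexMap {X Y : ModuleCat.{u} R} (f : X ⟶ Y)
    (C : ChainComplex (ModuleCat.{u} R) ℕ) : tensorComplex X C ⟶ tensorComplex Y C :=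
  (NatTrans.mapHomologicalComplex ((tensoringLeft (ModuleCat.{u} R)).map f) _).app C

/-- The complex `X₁ ⊗ C ⟶ X₂ ⊗ C ⟶ X₃ ⊗ C` obtained from `X₁ ⟶ X₂ ⟶ X₃`. -/
noncomputable abbrev tensorShortComplex (S : ShortComplex (ModuleCat.{u} R))
    (C : ChainComplex (ModuleCat.{u} R) ℕ) : ShortComplex (ChainComplex (ModuleCat.{u} R) ℕ) :=
  ShortComplex.mk (tensorComplexMap S.f C) (tensorComplexMap S.g C) (by
    ext i : 1
    change (S.f ▷ C.X i) ≫ (S.g ▷ C.X i) = 0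
    rw [← comp_whiskerRight, S.zero, MonoidalPreadditive.zero_whiskerRight])

lemma tensorShortComplex_shortExact {S : ShortComplex (ModuleCat.{u} R)} (hS : S.ShortExact)
    (C : ChainComplex (ModuleCat.{u} R) ℕ) [∀ i, Module.Flat R (C.X i)] :
    (tensorShortComplex S C).ShortExact :=
  HomologicalComplex.shortExact_of_degreewise_shortExact _ fun i ↦
    hS.map_of_exact (tensorRight (C.X i))

instance flat_of_projectiveResolution {M : ModuleCat.{u} R} (P : ProjectiveResolution M) (i : ℕ) :
    Module.Flat R (P.complex.X i) :=
  have : Module.Projective R (P.complex.X i) := (IsProjective.iff_projective _).mpr (P.projective i)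
  inferInstance

/-- The map `Tor_j(X, L) ⟶ Tor_j(Y, L)` induced by `f : X ⟶ Y`. -/
noncomputable abbrev torMap (j : ℕ) {X Y : ModuleCat.{u} R} (f : X ⟶ Y) (L : ModuleCat.{u} R) :
    ((Tor (ModuleCat.{u} R) j).obj X).obj L ⟶ ((Tor (ModuleCat.{u} R) j).obj Y).obj L :=
  ((Tor (ModuleCat.{u} R) j).map f).app L

/-- `Tor_j(X, L)` as the homology of `X ⊗ P` for a projective resolution `P` of `L`. -/
noncomputable def torIsoHomology (j : ℕ) (X : ModuleCat.{u} R) {L : ModuleCat.{u} R}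
    (P : ProjectiveResolution L) :
    ((Tor (ModuleCat.{u} R) j).obj X).obj L ≅ (tensorComplex X P.complex).homology j :=
  P.isoLeftDerivedObj ((tensoringLeft (ModuleCat.{u} R)).obj X) j

lemma torMap_comp_torIsoHomology_hom (j : ℕ) {X Y : ModuleCat.{u} R} (f : X ⟶ Y)
    {L : ModuleCat.{u} R} (P : ProjectiveResolution L) :
    torMap j f L ≫ (torIsoHomology j Y P).hom =
      (torIsoHomology j X P).hom ≫
        HomologicalComplex.homologyMap (tensorComplexMap f P.complex) j := by
  rw [← Iso.eq_comp_inv, Category.assoc]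
  exact P.leftDerived_app_eq ((tensoringLeft (ModuleCat.{u} R)).map f) j

lemma torIsoHomology_inv_comp_torMap (j : ℕ) {X Y : ModuleCat.{u} R} (f : X ⟶ Y)
    {L : ModuleCat.{u} R} (P : ProjectiveResolution L) :
    (torIsoHomology j X P).inv ≫ torMap j f L =
      HomologicalComplex.homologyMap (tensorComplexMap f P.complex) j ≫
        (torIsoHomology j Y P).inv := by
  rw [Iso.inv_comp_eq, ← Category.assoc, Iso.eq_comp_inv, torMap_comp_torIsoHomology_hom]

variable {S : ShortComplex (ModuleCat.{u} R)}

lemma exact_torMap_torMap (hS : S.ShortExact) (j : ℕ) (L : ModuleCat.{u} R) :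
    Function.Exact (torMap j S.f L).hom (torMap j S.g L).hom := by
  let P := projectiveResolution L
  have h := (tensorShortComplex_shortExact hS P.complex).homology_exact₂ j
  rw [ShortComplex.ShortExact.moduleCat_exact_iff_function_exact] at h
  refine Function.Exact.of_ladder_linearEquiv_of_exact
    (e₁ := (torIsoHomology j S.X₁ P).symm.toLinearEquiv)
    (e₂ := (torIsoHomology j S.X₂ P).symm.toLinearEquiv)
    (e₃ := (torIsoHomology j S.X₃ P).symm.toLinearEquiv) ?_ ?_ h
  · exact congrArg ModuleCat.Hom.hom (torIsoHomology_inv_comp_torMap j S.f P)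
  · exact congrArg ModuleCat.Hom.hom (torIsoHomology_inv_comp_torMap j S.g P)

lemma exists_exact_torMap (hS : S.ShortExact) (j : ℕ) (L : ModuleCat.{u} R) :
    ∃ δ : ((Tor (ModuleCat.{u} R) (j + 1)).obj S.X₃).obj L →ₗ[R]
        ((Tor (ModuleCat.{u} R) j).obj S.X₁).obj L,
      Function.Exact (torMap (j + 1) S.g L).hom δ ∧ Function.Exact δ (torMap j S.f L).hom := by
  let P := projectiveResolution L
  have hP := tensorShortComplex_shortExact hS P.complex
  have h₃ := hP.homology_exact₃ (j + 1) j (by simp)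
  have h₁ := hP.homology_exact₁ (j + 1) j (by simp)
  rw [ShortComplex.ShortExact.moduleCat_exact_iff_function_exact] at h₁ h₃
  let e₁ := torIsoHomology j S.X₁ P
  let e₂ := torIsoHomology j S.X₂ P
  let e₂' := torIsoHomology (j + 1) S.X₂ P
  let e₃ := torIsoHomology (j + 1) S.X₃ P
  let δ := e₃.hom ≫ hP.δ (j + 1) j (by simp) ≫ e₁.inv
  have hδ : e₃.inv ≫ δ = hP.δ (j + 1) j (by simp) ≫ e₁.inv := Iso.inv_hom_id_assoc e₃ _
  exact ⟨δ.hom,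
    Function.Exact.of_ladder_linearEquiv_of_exact (e₁ := e₂'.symm.toLinearEquiv)
      (e₂ := e₃.symm.toLinearEquiv) (e₃ := e₁.symm.toLinearEquiv)
      (congrArg ModuleCat.Hom.hom (torIsoHomology_inv_comp_torMap (j + 1) S.g P))
      (congrArg ModuleCat.Hom.hom hδ) h₃,
    Function.Exact.of_ladder_linearEquiv_of_exact (e₁ := e₃.symm.toLinearEquiv)
      (e₂ := e₁.symm.toLinearEquiv) (e₃ := e₂.symm.toLinearEquiv)
      (congrArg ModuleCat.Hom.hom hδ)
      (congrArg ModuleCat.Hom.hom (torIsoHomology_inv_comp_torMap j S.f P)) h₁⟩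

lemma isZero_Tor_succ_of_flat (X L : ModuleCat.{u} R) [Module.Flat R X] (j : ℕ) :
    IsZero (((Tor (ModuleCat.{u} R) (j + 1)).obj X).obj L) := by
  let P := projectiveResolution L
  refine IsZero.of_iso ?_ (torIsoHomology (j + 1) X P)
  have h := P.complex_exactAt_succ j
  rw [← HomologicalComplex.exactAt_iff_isZero_homology]
  rw [HomologicalComplex.exactAt_iff' _ (j + 2) (j + 1) j (by simp) (by simp),
    ShortComplex.ShortExact.moduleCat_exact_iff_function_exact] at h ⊢
  exact Module.Flat.lTensor_exact X h

/-- The isomorphism `Tor_0(X, L) ≅ X ⊗ L`. -/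
noncomputable def torZeroIso (X L : ModuleCat.{u} R) :
    ((Tor (ModuleCat.{u} R) 0).obj X).obj L ≅ X ⊗ L :=
  have : PreservesFiniteColimits ((tensoringLeft (ModuleCat.{u} R)).obj X) :=
    inferInstanceAs (PreservesFiniteColimits (tensorLeft X))
  (((tensoringLeft (ModuleCat.{u} R)).obj X).leftDerivedZeroIsoSelf).app L

lemma opcyclesMap_comp_fromLeftDerivedZero' {X Y L : ModuleCat.{u} R} (f : X ⟶ Y)
    (P : ProjectiveResolution L) :
    HomologicalComplex.opcyclesMap (tensorComplexMap f P.complex) 0 ≫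
        P.fromLeftDerivedZero' ((tensoringLeft (ModuleCat.{u} R)).obj Y) =
      P.fromLeftDerivedZero' ((tensoringLeft (ModuleCat.{u} R)).obj X) ≫ f ▷ L := by
  rw [← cancel_epi (HomologicalComplex.pOpcycles _ _), HomologicalComplex.p_opcyclesMap_assoc,
    P.pOpcycles_comp_fromLeftDerivedZero', P.pOpcycles_comp_fromLeftDerivedZero'_assoc]
  exact (whisker_exchange f (P.π.f 0)).symm

lemma torMap_zero_comp_torZeroIso_hom {X Y : ModuleCat.{u} R} (f : X ⟶ Y) (L : ModuleCat.{u} R) :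
    torMap 0 f L ≫ (torZeroIso Y L).hom = (torZeroIso X L).hom ≫ f ▷ L := by
  let P := projectiveResolution L
  change _ ≫ ((tensoringLeft (ModuleCat.{u} R)).obj Y).fromLeftDerivedZero.app L =
    ((tensoringLeft (ModuleCat.{u} R)).obj X).fromLeftDerivedZero.app L ≫ _
  rw [P.fromLeftDerivedZero_eq, P.fromLeftDerivedZero_eq]
  change torMap 0 f L ≫ (torIsoHomology 0 Y P).hom ≫ HomologicalComplex.homologyι _ 0 ≫ _ =
    ((torIsoHomology 0 X P).hom ≫ HomologicalComplex.homologyι _ 0 ≫ _) ≫ _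
  rw [reassoc_of% torMap_comp_torIsoHomology_hom 0 f P,
    HomologicalComplex.homologyι_naturality_assoc, opcyclesMap_comp_fromLeftDerivedZero',
    Category.assoc, Category.assoc]

end TorLES

section DimensionShift

variable {R : Type u} [CommRing R] (L : ModuleCat.{u} R)

/-- The length of `Tor_j(X, L)`. -/
noncomputable def torLength (j : ℕ) (X : ModuleCat.{u} R) : ℕ∞ :=
  Module.length R (((Tor (ModuleCat.{u} R) j).obj X).obj L)

lemma torLength_congr (j : ℕ) {X Y : ModuleCat.{u} R} (e : X ≅ Y) :
    torLength L j X = torLength L j Y :=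
  (((Tor (ModuleCat.{u} R) j).mapIso e).app L).toLinearEquiv.length_eq

lemma length_ker_torMap_f_le {S : ShortComplex (ModuleCat.{u} R)} (hS : S.ShortExact) (j : ℕ) :
    Module.length R (LinearMap.ker (torMap j S.f L).hom) ≤ torLength L (j + 1) S.X₃ :=
  have ⟨_, _, hδ⟩ := exists_exact_torMap hS j L
  length_ker_le_of_exact hδ

lemma torMap_succ_eq_zero_of_flat {X Y : ModuleCat.{u} R} (f : X ⟶ Y) [Module.Flat R Y] (j : ℕ) :
    (torMap (j + 1) f L).hom = 0 :=
  congrArg ModuleCat.Hom.hom ((isZero_Tor_succ_of_flat Y L j).eq_of_tgt _ 0)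

lemma torLength_succ_eq_length_ker {S : ShortComplex (ModuleCat.{u} R)} (hS : S.ShortExact)
    [Module.Flat R S.X₂] (j : ℕ) :
    torLength L (j + 1) S.X₃ = Module.length R (LinearMap.ker (torMap j S.f L).hom) := by
  obtain ⟨δ, hg, hf⟩ := exists_exact_torMap hS j L
  refine (length_ker_eq_of_exact ?_ hf).symm
  have h : torMap (j + 1) S.g L = 0 := (isZero_Tor_succ_of_flat S.X₂ L j).eq_of_src _ 0
  rw [h] at hg
  exact (LinearMap.exact_zero_iff_injective _ _).mp hg

lemma length_ker_torMap_g_le {S : ShortComplex (ModuleCat.{u} R)} (hS : S.ShortExact) (j : ℕ) :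
    Module.length R (LinearMap.ker (torMap j S.g L).hom) ≤ torLength L j S.X₁ :=
  length_ker_le_of_exact (exact_torMap_torMap hS j L)

/-- The four-term exact sequence `0 ⟶ H ⟶ X ⟶ Y ⟶ Q ⟶ 0` is split at the image of `f`. -/
lemma length_ker_torMap_le {H X Y Q : ModuleCat.{u} R} {i : H ⟶ X} {f : X ⟶ Y} {p : Y ⟶ Q}
    [Mono i] [Epi p] {hif : i ≫ f = 0} {hfp : f ≫ p = 0} (hX : (ShortComplex.mk i f hif).Exact)
    (hY : (ShortComplex.mk f p hfp).Exact) (j : ℕ) :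
    Module.length R (LinearMap.ker (torMap j f L).hom) ≤
      torLength L j H + torLength L (j + 1) Q := by
  let S := ShortComplex.mk i (factorThruImage f) (by
    rw [← cancel_mono (image.ι f), Category.assoc, image.fac, hif, zero_comp])
  let T := ShortComplex.mk (image.ι f) p (by
    rw [← cancel_epi (factorThruImage f), image.fac_assoc, hfp, comp_zero])
  have hS : S.ShortExact := ⟨(ShortComplex.exact_iff_of_epi_of_isIso_of_mono
    ({ τ₁ := 𝟙 H, τ₂ := 𝟙 X, τ₃ := image.ι f } : S ⟶ ShortComplex.mk i f hif)).mpr hX⟩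
  have hT : T.ShortExact := ⟨(ShortComplex.exact_iff_of_epi_of_isIso_of_mono
    ({ τ₁ := factorThruImage f, τ₂ := 𝟙 Y, τ₃ := 𝟙 Q } : ShortComplex.mk f p hfp ⟶ T)).mp hY⟩
  have hf : torMap j f L = torMap j S.g L ≫ torMap j T.f L := by
    rw [torMap, ← image.fac f, Functor.map_comp, NatTrans.comp_app]
  rw [hf]
  exact (length_ker_comp_le _ _).trans
    (add_le_add (length_ker_torMap_g_le L hS j) (length_ker_torMap_f_le L hT j))

variable (C : ChainComplex (ModuleCat.{u} R) ℕ)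

lemma exact_homologyι_fromOpcycles (i j : ℕ) (hij : (ComplexShape.down ℕ).Rel i j) :
    (ShortComplex.mk _ _ (C.homologyι_comp_fromOpcycles i j)).Exact :=
  ShortComplex.exact_of_f_is_kernel _ (C.homologyIsKernel i j ((ComplexShape.down ℕ).next_eq' hij))

lemma fromOpcycles_pOpcycles (i j : ℕ) : C.fromOpcycles i j ≫ C.pOpcycles j = 0 := by
  rw [← cancel_epi (C.pOpcycles i), C.p_fromOpcycles_assoc, C.d_pOpcycles, comp_zero]

lemma exact_fromOpcycles_pOpcycles (i j : ℕ) (hij : (ComplexShape.down ℕ).Rel i j) :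
    (ShortComplex.mk _ _ (fromOpcycles_pOpcycles C i j)).Exact :=
  (ShortComplex.exact_iff_of_epi_of_isIso_of_mono
    ({ τ₁ := C.pOpcycles i, τ₂ := 𝟙 (C.X j), τ₃ := 𝟙 (C.opcycles j) } :
      ShortComplex.mk _ _ (C.d_pOpcycles i j) ⟶
        ShortComplex.mk _ _ (fromOpcycles_pOpcycles C i j))).mp
    (ShortComplex.exact_of_g_is_cokernel _
      (C.opcyclesIsCokernel i j ((ComplexShape.down ℕ).prev_eq' hij)))

lemma length_ker_torMap_fromOpcycles_le (n j : ℕ) :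
    Module.length R (LinearMap.ker (torMap j (C.fromOpcycles (n + 1) n) L).hom) ≤
      torLength L j (C.homology (n + 1)) + torLength L (j + 1) (C.opcycles n) :=
  length_ker_torMap_le L (exact_homologyι_fromOpcycles C (n + 1) n rfl)
    (exact_fromOpcycles_pOpcycles C (n + 1) n rfl) j

lemma torLength_succ_opcycles_le [∀ i, Module.Flat R (C.X i)] (n j : ℕ) :
    torLength L (j + 1) (C.opcycles n) ≤
      ∑ i ∈ Finset.range (n + 1), torLength L (j + 1 + n - i) (C.homology i) := by
  induction n generalizing j with
  | zero =>
    simpa using (torLength_congr L (j + 1) C.isoHomologyι₀).ge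
  | succ n ih =>
    have h := length_ker_torMap_fromOpcycles_le L C n (j + 1)
    rw [torMap_succ_eq_zero_of_flat, LinearMap.ker_zero, Module.length_top] at h
    rw [Finset.sum_range_succ, Nat.add_sub_cancel, add_comm (Finset.sum _ _)]
    refine h.trans (add_le_add le_rfl ((ih (j + 1)).trans_eq ?_))
    exact Finset.sum_congr rfl fun i _ ↦ by rw [show j + 1 + 1 + n = j + 1 + (n + 1) by omega]

end DimensionShift

section HomologyTensor

variable {R : Type u} [CommRing R] (L : ModuleCat.{u} R) (C : ChainComplex (ModuleCat.{u} R) ℕ)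

/-- The isomorphism `coker (L ⊗ C_{n + 1} ⟶ L ⊗ C_n) ≅ L ⊗ coker (C_{n + 1} ⟶ C_n)`. -/
noncomputable def tensorComplexOpcyclesIso (n : ℕ) :
    (tensorComplex L C).opcycles n ≅ L ⊗ C.opcycles n :=
  ((tensorComplex L C).opcyclesIsCokernel (n + 1) n (by simp)).coconePointUniqueUpToIso
    (CokernelCofork.mapIsColimit _ (C.opcyclesIsCokernel (n + 1) n (by simp)) (tensorLeft L))

lemma pOpcycles_comp_tensorComplexOpcyclesIso_hom (n : ℕ) :
    (tensorComplex L C).pOpcycles n ≫ (tensorComplexOpcyclesIso L C n).hom = L ◁ C.pOpcycles n :=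
  ((tensorComplex L C).opcyclesIsCokernel (n + 1) n (by simp)).comp_coconePointUniqueUpToIso_hom
    (CokernelCofork.mapIsColimit _ (C.opcyclesIsCokernel (n + 1) n (by simp)) (tensorLeft L))
    WalkingParallelPair.one

lemma fromOpcycles_tensorComplex (n : ℕ) :
    (tensorComplex L C).fromOpcycles (n + 1) n =
      (tensorComplexOpcyclesIso L C (n + 1)).hom ≫ L ◁ C.fromOpcycles (n + 1) n := by
  refine (cancel_epi ((tensorComplex L C).pOpcycles (n + 1))).mp ?_
  refine (HomologicalComplex.p_fromOpcycles _ _ _).trans ?_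
  have h : L ◁ C.d (n + 1) n =
      (tensorComplex L C).pOpcycles (n + 1) ≫ (tensorComplexOpcyclesIso L C (n + 1)).hom ≫
        L ◁ C.fromOpcycles (n + 1) n := by
    rw [reassoc_of% pOpcycles_comp_tensorComplexOpcyclesIso_hom]
    exact (congrArg (L ◁ ·) (C.p_fromOpcycles (n + 1) n)).symm.trans (whiskerLeft_comp _ _ _)
  exact h

lemma length_ker_torMap_zero {X Y : ModuleCat.{u} R} (f : X ⟶ Y) :
    Module.length R (LinearMap.ker (torMap 0 f L).hom) =
      Module.length R (LinearMap.ker (L ◁ f).hom) := by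
  let e (Z : ModuleCat.{u} R) := torZeroIso Z L ≪≫ β_ Z L
  refine length_ker_congr (e X).toLinearEquiv (e Y).toLinearEquiv ?_
  have h : torMap 0 f L ≫ (e Y).hom = (e X).hom ≫ L ◁ f := by
    simp only [e, Iso.trans_hom, reassoc_of% torMap_zero_comp_torZeroIso_hom f L, Category.assoc,
      BraidedCategory.braiding_naturality_left]
  exact congrArg ModuleCat.Hom.hom h

lemma length_homology_tensorComplex_zero :
    Module.length R ((tensorComplex L C).homology 0) = torLength L 0 (C.homology 0) := by
  let e := ChainComplex.isoHomologyι₀ (tensorComplex L C) ≪≫ tensorComplexOpcyclesIso L C 0 ≪≫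
    (β_ L (C.opcycles 0)) ≪≫ (torZeroIso (C.opcycles 0) L).symm
  exact e.toLinearEquiv.length_eq.trans (torLength_congr L 0 C.isoHomologyι₀).symm

lemma length_homology_tensorComplex_succ (n : ℕ) :
    Module.length R ((tensorComplex L C).homology (n + 1)) =
      Module.length R (LinearMap.ker (torMap 0 (C.fromOpcycles (n + 1) n) L).hom) := by
  have h := exact_homologyι_fromOpcycles (tensorComplex L C) (n + 1) n rfl
  rw [ShortComplex.ShortExact.moduleCat_exact_iff_function_exact] at h
  rw [length_ker_torMap_zero, ← length_ker_eq_of_exact ((ModuleCat.mono_iff_injective _).mp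
    (inferInstanceAs (Mono ((tensorComplex L C).homologyι (n + 1))))) h]
  refine length_ker_congr (tensorComplexOpcyclesIso L C (n + 1)).toLinearEquiv
    (LinearEquiv.refl R _) ?_
  exact congrArg ModuleCat.Hom.hom (fromOpcycles_tensorComplex L C n)

/-- The bound read off from the hyper-Tor spectral sequence `Tor_j(H_i(C), L) ⇒ H_{i+j}(L ⊗ C)`. -/
lemma length_homology_tensorComplex_le [∀ i, Module.Flat R (C.X i)] (n : ℕ) :
    Module.length R ((tensorComplex L C).homology n) ≤
      ∑ i ∈ Finset.range (n + 1), torLength L (n - i) (C.homology i) := by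
  cases n with
  | zero => simpa using (length_homology_tensorComplex_zero L C).le
  | succ n =>
    rw [length_homology_tensorComplex_succ, Finset.sum_range_succ, Nat.sub_self,
      add_comm (Finset.sum _ _)]
    refine (length_ker_torMap_fromOpcycles_le L C n 0).trans (add_le_add le_rfl ?_)
    exact (torLength_succ_opcycles_le L C n 0).trans_eq
      (Finset.sum_congr rfl fun i _ ↦ by rw [zero_add, add_comm 1 n])

variable {C} in
lemma opcycles_shortExact {n : ℕ} (hn : C.ExactAt (n + 1)) :
    (ShortComplex.mk _ _ (fromOpcycles_pOpcycles C (n + 1) n)).ShortExact :=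
  have : Mono (C.fromOpcycles (n + 1) n) :=
    (exact_homologyι_fromOpcycles C (n + 1) n rfl).mono_g
      ((C.exactAt_iff_isZero_homology (n + 1)).mp hn |>.eq_of_src _ _)
  ⟨exact_fromOpcycles_pOpcycles C (n + 1) n rfl⟩

variable {C} in
lemma torLength_opcycles_eq [∀ i, Module.Flat R (C.X i)] (hC : ∀ n, C.ExactAt (n + 1)) (n j : ℕ) :
    torLength L (j + 1) (C.opcycles n) = torLength L (j + 1 + n) (C.opcycles 0) := by
  induction n generalizing j with
  | zero => rfl
  | succ n ih =>
    rw [show j + 1 + (n + 1) = j + 1 + 1 + n by omega, ← ih,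
      torLength_succ_eq_length_ker L (opcycles_shortExact (hC n)), torMap_succ_eq_zero_of_flat,
      LinearMap.ker_zero, Module.length_top]
    rfl

variable {C} in
lemma length_homology_tensorComplex_eq [∀ i, Module.Flat R (C.X i)]
    (hC : ∀ n, C.ExactAt (n + 1)) (n : ℕ) :
    Module.length R ((tensorComplex L C).homology n) = torLength L n (C.homology 0) := by
  cases n with
  | zero => exact length_homology_tensorComplex_zero L C
  | succ n =>
    rw [length_homology_tensorComplex_succ,
      ← torLength_succ_eq_length_ker L (opcycles_shortExact (hC n)), zero_add,
      torLength_congr L (n + 1) C.isoHomologyι₀, ← Nat.zero_add 1, torLength_opcycles_eq L hC]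
    congr 1; omega

lemma length_homology_tensorComplex_resolution {M : ModuleCat.{u} R} (P : ProjectiveResolution M)
    (n : ℕ) : Module.length R ((tensorComplex L P.complex).homology n) = torLength L n M := by
  rw [length_homology_tensorComplex_eq L P.complex_exactAt_succ]
  exact torLength_congr L n
    (isoOfQuasiIsoAt P.π 0 ≪≫ HomologicalComplex.singleObjHomologySelfIso _ 0 M)

end HomologyTensor

section Total

variable {R : Type u} [CommRing R]

/-- A double complex with exact augmented rows has an acyclic augmented total complex: a primitive
is built row by row. -/
lemma exists_total_primitive {A : ℕ → ℕ → Type u} [∀ p q, AddCommGroup (A p q)]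
    [∀ p q, Module R (A p q)] {B : ℕ → Type u} [∀ q, AddCommGroup (B q)] [∀ q, Module R (B q)]
    {dh : ∀ p q, A (p + 1) q →ₗ[R] A p q} {dv : ∀ p q, A p (q + 1) →ₗ[R] A p q}
    {ε : ∀ q, A 0 q →ₗ[R] B q}
    (hcomm : ∀ p q x, dh p q (dv (p + 1) q x) = dv p q (dh p (q + 1) x))
    (hv : ∀ p q x, dv p q (dv p (q + 1) x) = 0)
    (h₀ : ∀ q, Function.Exact (dh 0 q) (ε q))
    (h₁ : ∀ p q, Function.Exact (dh (p + 1) q) (dh p q)) (x : ∀ p q, A p q)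
    (hx : ∀ p q, dh p q (x (p + 1) q) + (-1 : R) ^ p • dv p q (x p (q + 1)) = 0)
    (hx₀ : ∀ q, ε q (x 0 q) = 0) :
    ∃ y : ∀ p q, A p q, (∀ q, y 0 q = 0) ∧
      ∀ p q, dh p q (y (p + 1) q) + (-1 : R) ^ p • dv p q (y p (q + 1)) = x p q := by
  let Row (p : ℕ) := {y : ∀ q, A p q //
    ∀ q, ∃ z, dh p q z = x p q - (-1 : R) ^ p • dv p q (y (q + 1))}
  have exists_next (p : ℕ) (y : Row p) : ∃ z : Row (p + 1),
      ∀ q, dh p q (z.1 q) = x p q - (-1 : R) ^ p • dv p q (y.1 (q + 1)) := by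
    choose z hz using y.2
    refine ⟨⟨z, fun q ↦ (h₁ p q _).mp ?_⟩, hz⟩
    rw [map_sub, map_smul, hcomm, hz, map_sub, map_smul, hv, smul_zero, sub_zero, ← hx p q,
      pow_succ, mul_neg_one, neg_smul, sub_neg_eq_add]
  choose next hnext using exists_next
  let y (p : ℕ) : Row p := p.rec ⟨0, fun q ↦ (h₀ q _).mp (by simp [hx₀])⟩ next
  refine ⟨fun p ↦ (y p).1, fun q ↦ rfl, fun p q ↦ ?_⟩
  rw [show dh p q ((y (p + 1)).1 q) = _ from hnext p (y p) q, sub_add_cancel]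

variable (C D : ChainComplex (ModuleCat.{u} R) ℕ)

/-- The degree `n` part of the total complex of the double complex `C_p ⊗ D_q`: a direct sum over
`p + q = n`, written as a product so that its elements are families. -/
abbrev TensorTotalDegree (n : ℕ) : Type u := ∀ s : antidiagonal n, C.X s.1.1 ⊗[R] D.X s.1.2

/-- The differential of the total complex of the double complex `C_p ⊗ D_q`. -/
noncomputable def tensorTotalD (n : ℕ) :
    TensorTotalDegree C D (n + 1) →ₗ[R] TensorTotalDegree C D n :=
  LinearMap.pi fun s ↦
    (C.d (s.1.1 + 1) s.1.1).hom.rTensor (D.X s.1.2) ∘ₗ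
      LinearMap.proj (φ := fun t : antidiagonal (n + 1) ↦ C.X t.1.1 ⊗[R] D.X t.1.2)
        ⟨(s.1.1 + 1, s.1.2), by have := mem_antidiagonal.mp s.2; simp; omega⟩ +
    (-1 : R) ^ s.1.1 • (D.d (s.1.2 + 1) s.1.2).hom.lTensor (C.X s.1.1) ∘ₗ
      LinearMap.proj (φ := fun t : antidiagonal (n + 1) ↦ C.X t.1.1 ⊗[R] D.X t.1.2)
        ⟨(s.1.1, s.1.2 + 1), by have := mem_antidiagonal.mp s.2; simp; omega⟩

lemma tensorTotalD_apply {n : ℕ} (x : TensorTotalDegree C D (n + 1)) (p q : ℕ)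
    (h : (p, q) ∈ antidiagonal n) (h₁ : (p + 1, q) ∈ antidiagonal (n + 1))
    (h₂ : (p, q + 1) ∈ antidiagonal (n + 1)) :
    tensorTotalD C D n x ⟨(p, q), h⟩ =
      (C.d (p + 1) p).hom.rTensor (D.X q) (x ⟨(p + 1, q), h₁⟩) +
        (-1 : R) ^ p • (D.d (q + 1) q).hom.lTensor (C.X p) (x ⟨(p, q + 1), h₂⟩) := rfl

lemma rTensor_lTensor_apply_comm {X X' Y Y' : ModuleCat.{u} R} (f : X ⟶ X') (g : Y ⟶ Y')
    (x : X ⊗[R] Y) :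
    f.hom.rTensor Y' (g.hom.lTensor X x) = g.hom.lTensor X' (f.hom.rTensor Y x) :=
  LinearMap.congr_fun ((LinearMap.rTensor_comp_lTensor ..).trans
    (LinearMap.lTensor_comp_rTensor ..).symm) x

lemma rTensor_apply_rTensor_apply {X X' X'' : ModuleCat.{u} R} {f : X ⟶ X'} {g : X' ⟶ X''}
    (h : f ≫ g = 0) (Y : ModuleCat.{u} R) (x : X ⊗[R] Y) :
    g.hom.rTensor Y (f.hom.rTensor Y x) = 0 := by
  rw [← LinearMap.rTensor_comp_apply, ← ModuleCat.hom_comp, h, ModuleCat.hom_zero,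
    LinearMap.rTensor_zero, LinearMap.zero_apply]

lemma lTensor_apply_lTensor_apply {Y Y' Y'' : ModuleCat.{u} R} {f : Y ⟶ Y'} {g : Y' ⟶ Y''}
    (h : f ≫ g = 0) (X : ModuleCat.{u} R) (x : X ⊗[R] Y) :
    g.hom.lTensor X (f.hom.lTensor X x) = 0 := by
  rw [← LinearMap.lTensor_comp_apply, ← ModuleCat.hom_comp, h, ModuleCat.hom_zero,
    LinearMap.lTensor_zero, LinearMap.zero_apply]

lemma tensorTotalD_comp_tensorTotalD (n : ℕ) :
    tensorTotalD C D n ∘ₗ tensorTotalD C D (n + 1) = 0 := by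
  refine LinearMap.ext fun x ↦ funext fun ⟨⟨p, q⟩, h⟩ ↦ ?_
  have hpq : p + q = n := mem_antidiagonal.mp h
  rw [LinearMap.comp_apply, tensorTotalD_apply C D _ p q h (by simp; omega) (by simp; omega),
    tensorTotalD_apply C D _ (p + 1) q _ (by simp; omega) (by simp; omega),
    tensorTotalD_apply C D _ p (q + 1) _ (by simp; omega) (by simp; omega)]
  simp only [map_add, map_smul, rTensor_apply_rTensor_apply (C.d_comp_d _ _ _),
    lTensor_apply_lTensor_apply (D.d_comp_d _ _ _), rTensor_lTensor_apply_comm, smul_zero,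
    add_zero, zero_add]
  rw [pow_succ, mul_neg_one, neg_smul, neg_add_cancel]
  rfl

/-- The total complex of the double complex `C_p ⊗ D_q`. -/
noncomputable def tensorTotal : ChainComplex (ModuleCat.{u} R) ℕ :=
  ChainComplex.of (fun n ↦ ModuleCat.of R (TensorTotalDegree C D n))
    (fun n ↦ ModuleCat.ofHom (tensorTotalD C D n))
    fun n ↦ ModuleCat.hom_ext (tensorTotalD_comp_tensorTotalD C D n)

lemma tensorTotal_d (n : ℕ) :
    (tensorTotal C D).d (n + 1) n = ModuleCat.ofHom (tensorTotalD C D n) :=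
  ChainComplex.of_d (fun n ↦ ModuleCat.of R (TensorTotalDegree C D n))
    (fun n ↦ ModuleCat.ofHom (tensorTotalD C D n)) n

instance [∀ i, Module.Flat R (C.X i)] [∀ i, Module.Flat R (D.X i)] (n : ℕ) :
    Module.Flat R ((tensorTotal C D).X n) :=
  Module.Flat.of_linearEquiv
    (DirectSum.linearEquivFunOnFintype R (antidiagonal n) fun s ↦ C.X s.1.1 ⊗[R] D.X s.1.2).symm

variable {C D}

lemma isIso_homologyMap_g_of_acyclic {S : ShortComplex (ChainComplex (ModuleCat.{u} R) ℕ)}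
    (hS : S.ShortExact) (h : S.X₁.Acyclic) (n : ℕ) :
    IsIso (HomologicalComplex.homologyMap S.g n) := by
  have hzero (i : ℕ) := (S.X₁.exactAt_iff_isZero_homology i).mp (h i)
  have : Mono (HomologicalComplex.homologyMap S.g n) :=
    (hS.homology_exact₂ n).mono_g ((hzero n).eq_of_src _ _)
  have : Epi (HomologicalComplex.homologyMap S.g n) := by
    cases n with
    | zero =>
      have := hS.epi_g
      exact HomologicalComplex.epi_homologyMap_of_epi_of_not_rel S.g 0 (by simp)
    | succ n => exact (hS.homology_exact₃ (n + 1) n rfl).epi_f ((hzero n).eq_of_tgt _ _)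
  exact isIso_of_mono_of_epi _

lemma exactAt_iff_forall_exists (n : ℕ) :
    C.ExactAt n ↔ ∀ x : C.X n, (∀ m, (C.d n m).hom x = 0) → ∃ y, (C.d (n + 1) n).hom y = x := by
  rw [C.exactAt_iff' (n + 1) n ((ComplexShape.down ℕ).next n) (by simp) rfl,
    ShortComplex.ShortExact.moduleCat_exact_iff_function_exact]
  have hd (x : C.X n) (hx : (C.d n ((ComplexShape.down ℕ).next n)).hom x = 0) (m : ℕ) :
      (C.d n m).hom x = 0 := by
    by_cases hm : (ComplexShape.down ℕ).Rel n m
    · rwa [← (ComplexShape.down ℕ).next_eq' hm]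
    · rw [C.shape n m hm]; rfl
  refine ⟨fun h x hx ↦ (h x).mp (hx _), fun h x ↦ ⟨fun hx ↦ h x (hd x hx), ?_⟩⟩
  rintro ⟨y, rfl⟩
  exact LinearMap.congr_fun (congrArg ModuleCat.Hom.hom (C.d_comp_d (n + 1) n _)) y

lemma isIso_homologyMap_of_surjective (φ : C ⟶ D)
    (hφ : ∀ n, Function.Surjective (φ.f n).hom)
    (h : ∀ n (x : C.X n), (φ.f n).hom x = 0 → (∀ m, (C.d n m).hom x = 0) →
      ∃ y, (φ.f (n + 1)).hom y = 0 ∧ (C.d (n + 1) n).hom y = x) (n : ℕ) :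
    IsIso (HomologicalComplex.homologyMap φ n) := by
  have (i : ℕ) : Epi (φ.f i) := (ModuleCat.epi_iff_surjective _).mpr (hφ i)
  have : Epi φ := HomologicalComplex.epi_of_epi_f φ inferInstance
  let ι := kernel.ι φ
  have hS : (ShortComplex.mk ι φ (kernel.condition φ)).ShortExact :=
    ⟨ShortComplex.exact_kernel φ⟩
  have hι (i : ℕ) : Function.Injective (ι.f i).hom := (ModuleCat.mono_iff_injective _).mp
    (hS.map_of_exact (HomologicalComplex.eval _ _ i)).mono_f
  have hex (i : ℕ) : Function.Exact (ι.f i).hom (φ.f i).hom :=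
    (ShortComplex.ShortExact.moduleCat_exact_iff_function_exact _).mp
      (hS.map_of_exact (HomologicalComplex.eval _ _ i)).exact
  have hcomm (i j : ℕ) (x) : (C.d i j).hom ((ι.f i).hom x) =
      (ι.f j).hom (((kernel φ).d i j).hom x) :=
    LinearMap.congr_fun (congrArg ModuleCat.Hom.hom (ι.comm i j)) x
  refine isIso_homologyMap_g_of_acyclic hS (fun i ↦ ?_) n
  refine (exactAt_iff_forall_exists i).mpr fun x hx ↦ ?_
  obtain ⟨y, hφy, hy⟩ := h i ((ι.f i).hom x) ((hex i).apply_apply_eq_zero x) fun m ↦ by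
    rw [hcomm, hx, map_zero]
  obtain ⟨z, rfl⟩ := (hex (i + 1) y).mp hφy
  exact ⟨z, hι i ((hcomm _ _ z).symm.trans hy)⟩

section Augmentation

variable {M : ModuleCat.{u} R} (P : ProjectiveResolution M) (D : ChainComplex (ModuleCat.{u} R) ℕ)

/-- The augmentation of a projective resolution, as a map to the resolved object itself. -/
noncomputable def resolutionAug : P.complex.X 0 ⟶ M := P.π.f 0

lemma d_comp_resolutionAug : P.complex.d 1 0 ≫ resolutionAug P = 0 := P.complex_d_comp_π_f_zero

lemma resolutionAug_surjective : Function.Surjective (resolutionAug P).hom :=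
  (ModuleCat.epi_iff_surjective _).mp (inferInstanceAs (Epi (P.π.f 0)))

/-- The augmentation `Tot(P ⊗ D) ⟶ M ⊗ D` of a resolution `P` of `M`. -/
noncomputable def tensorTotalAug : tensorTotal P.complex D ⟶ tensorComplex M D where
  f n := ModuleCat.ofHom ((resolutionAug P).hom.rTensor (D.X n) ∘ₗ LinearMap.proj
    (φ := fun t : antidiagonal n ↦ P.complex.X t.1.1 ⊗[R] D.X t.1.2) ⟨(0, n), by simp⟩)
  comm' := by
    rintro _ n rfl
    rw [tensorTotal_d]
    refine ModuleCat.hom_ext (LinearMap.ext fun x : TensorTotalDegree P.complex D (n + 1) ↦ ?_)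
    change (D.d (n + 1) n).hom.lTensor M ((resolutionAug P).hom.rTensor _ (x ⟨(0, n + 1), _⟩)) =
      (resolutionAug P).hom.rTensor _ (tensorTotalD P.complex D n x ⟨(0, n), _⟩)
    rw [tensorTotalD_apply _ _ _ 0 n _ (by simp [add_comm]) (by simp), map_add, pow_zero, one_smul,
      rTensor_apply_rTensor_apply (d_comp_resolutionAug P)]
    exact (rTensor_lTensor_apply_comm (resolutionAug P) (D.d (n + 1) n) _).symm.trans
      (zero_add _).symm

lemma tensorTotalAug_f_surjective (n : ℕ) :
    Function.Surjective ((tensorTotalAug P D).f n).hom :=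
  (LinearMap.rTensor_surjective _ (resolutionAug_surjective P)).comp
    (LinearMap.proj_surjective _)

variable [∀ i, Module.Flat R (D.X i)]

lemma exact_rTensor_resolutionAug (q : ℕ) :
    Function.Exact ((P.complex.d 1 0).hom.rTensor (D.X q))
      ((resolutionAug P).hom.rTensor (D.X q)) :=
  Module.Flat.rTensor_exact _
    ((ShortComplex.ShortExact.moduleCat_exact_iff_function_exact _).mp P.exact₀)

lemma exact_rTensor_d (p q : ℕ) :
    Function.Exact ((P.complex.d (p + 2) (p + 1)).hom.rTensor (D.X q))
      ((P.complex.d (p + 1) p).hom.rTensor (D.X q)) := by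
  have h := P.complex_exactAt_succ p
  rw [HomologicalComplex.exactAt_iff' _ (p + 2) (p + 1) p (by simp) (by simp),
    ShortComplex.ShortExact.moduleCat_exact_iff_function_exact] at h
  exact Module.Flat.rTensor_exact _ h

lemma exists_tensorTotal_primitive {n : ℕ} (x : TensorTotalDegree P.complex D n)
    (hx₀ : ((tensorTotalAug P D).f n).hom x = 0)
    (hx : ∀ m, ((tensorTotal P.complex D).d n m).hom x = 0) :
    ∃ y, ((tensorTotalAug P D).f (n + 1)).hom y = 0 ∧
      ((tensorTotal P.complex D).d (n + 1) n).hom y = x := by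
  let x' (p q : ℕ) : P.complex.X p ⊗[R] D.X q :=
    if h : (p, q) ∈ antidiagonal n then x ⟨(p, q), h⟩ else 0
  have hx' (p q : ℕ) : (P.complex.d (p + 1) p).hom.rTensor _ (x' (p + 1) q) +
      (-1 : R) ^ p • (D.d (q + 1) q).hom.lTensor _ (x' p (q + 1)) = 0 := by
    by_cases h : p + q + 1 = n
    · subst h
      have h := hx (p + q)
      rw [tensorTotal_d] at h
      have h₁ : p + 1 + q = p + q + 1 := by omega
      have hpq : tensorTotalD P.complex D (p + q) x ⟨(p, q), by simp⟩ = 0 := congrFun h _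
      simpa [x', h₁, add_assoc, tensorTotalD_apply _ _ x p q] using hpq
    · have h₁ : p + 1 + q ≠ n := by omega
      have h₂ : p + (q + 1) ≠ n := by omega
      simp [x', h₁, h₂]
  have hx₀' (q : ℕ) : (resolutionAug P).hom.rTensor (D.X q) (x' 0 q) = 0 := by
    by_cases h : q = n
    · subst h
      have hq : (0, q) ∈ antidiagonal q := by simp
      exact (congrArg _ (dif_pos hq)).trans hx₀
    · simp [x', h]
  obtain ⟨y, hy₀, hy⟩ := exists_total_primitive
    (fun p q ↦ rTensor_lTensor_apply_comm (P.complex.d (p + 1) p) (D.d (q + 1) q))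
    (fun p q ↦ lTensor_apply_lTensor_apply (D.d_comp_d _ _ _) (P.complex.X p))
    (exact_rTensor_resolutionAug P D) (exact_rTensor_d P D) x' hx' hx₀'
  refine ⟨fun s ↦ y s.1.1 s.1.2, ?_, ?_⟩
  · exact (congrArg ((resolutionAug P).hom.rTensor _) (hy₀ (n + 1))).trans (map_zero _)
  · rw [tensorTotal_d]
    refine funext fun ⟨⟨p, q⟩, h⟩ ↦ (hy p q).trans ?_
    exact dif_pos h

/-- Resolving the first argument computes `Tor_n(M, N)`, which Mathlib defines by resolving the
second one. -/
lemma nonempty_homology_tensorTotal_iso {M N : ModuleCat.{u} R} (P : ProjectiveResolution M)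
    (Q : ProjectiveResolution N) (n : ℕ) :
    Nonempty ((tensorTotal P.complex Q.complex).homology n ≅
      ((Tor (ModuleCat.{u} R) n).obj M).obj N) :=
  have := isIso_homologyMap_of_surjective (tensorTotalAug P Q.complex)
    (tensorTotalAug_f_surjective P Q.complex)
    (fun _ x ↦ exists_tensorTotal_primitive P Q.complex x) n
  ⟨asIso (HomologicalComplex.homologyMap (tensorTotalAug P Q.complex) n) ≪≫
    (torIsoHomology n M Q).symm⟩

end Augmentation

end Total

section SplitHomology

variable {R : Type u} [CommRing R]

lemma exists_comp_epi_eq_id {X Y : ModuleCat.{u} R} [IsSemisimpleModule R X] (f : X ⟶ Y) [Epi f] :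
    ∃ s : Y ⟶ X, s ≫ f = 𝟙 Y :=
  have ⟨s, hs⟩ := IsSemisimpleModule.lifting_property f.hom
    ((ModuleCat.epi_iff_surjective f).mp inferInstance) LinearMap.id
  ⟨ModuleCat.ofHom s, ModuleCat.hom_ext hs⟩

lemma exists_mono_comp_eq_id {X Y : ModuleCat.{u} R} [IsSemisimpleModule R Y] (f : X ⟶ Y) [Mono f] :
    ∃ r : Y ⟶ X, f ≫ r = 𝟙 X :=
  have ⟨r, hr⟩ := IsSemisimpleModule.extension_property f.hom
    ((ModuleCat.mono_iff_injective f).mp inferInstance) LinearMap.id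
  ⟨ModuleCat.ofHom r, ModuleCat.hom_ext hr⟩

lemma exists_split_homology (C : ChainComplex (ModuleCat.{u} R) ℕ) (n : ℕ)
    [IsSemisimpleModule R (C.X n)] :
    ∃ (σ : C.homology n ⟶ C.X n) (ρ : C.X n ⟶ C.homology n),
      (∀ m, σ ≫ C.d n m = 0) ∧ (∀ m, C.d m n ≫ ρ = 0) ∧ σ ≫ ρ = 𝟙 _ := by
  have : IsSemisimpleModule R (C.cycles n) := .of_injective (C.iCycles n).hom
    ((ModuleCat.mono_iff_injective _).mp inferInstance)
  have : IsSemisimpleModule R (C.opcycles n) := .of_surjective (C.pOpcycles n).hom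
    ((ModuleCat.epi_iff_surjective _).mp inferInstance)
  obtain ⟨s, hs⟩ := exists_comp_epi_eq_id (C.homologyπ n)
  obtain ⟨r, hr⟩ := exists_mono_comp_eq_id (C.homologyι n)
  refine ⟨s ≫ C.iCycles n, C.pOpcycles n ≫ r, fun m ↦ by simp, fun m ↦ by simp, ?_⟩
  rw [Category.assoc, ← C.homology_π_ι_assoc, reassoc_of% hs, hr]

lemma length_le_length_homology {C : ChainComplex (ModuleCat.{u} R) ℕ} {n : ℕ}
    {W : ModuleCat.{u} R} {σ : W ⟶ C.X n} {ρ : C.X n ⟶ W} (hσ : ∀ m, σ ≫ C.d n m = 0)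
    (hρ : ∀ m, C.d m n ≫ ρ = 0) (h : σ ≫ ρ = 𝟙 W) :
    Module.length R W ≤ Module.length R (C.homology n) := by
  let ι : W ⟶ C.homology n := C.liftCycles σ _ rfl (hσ _) ≫ C.homologyπ n
  have hι : ι ≫ C.homologyι n ≫ C.descOpcycles ρ _ rfl (hρ _) = 𝟙 W := by
    simpa [ι] using h
  have : IsSplitMono ι := ⟨⟨_, hι⟩⟩
  exact Module.length_le_of_injective ι.hom ((ModuleCat.mono_iff_injective _).mp inferInstance)

section Family

variable {C D : ChainComplex (ModuleCat.{u} R) ℕ} {V W : ℕ → ModuleCat.{u} R}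

lemma tensorTotalD_comp_piMap_eq_zero {σ : ∀ p, V p ⟶ C.X p} {τ : ∀ q, W q ⟶ D.X q}
    (hσ : ∀ p m, σ p ≫ C.d p m = 0) (hτ : ∀ q m, τ q ≫ D.d q m = 0) (n : ℕ) :
    tensorTotalD C D n ∘ₗ LinearMap.piMap (fun s : antidiagonal (n + 1) ↦
      TensorProduct.map (σ s.1.1).hom (τ s.1.2).hom) = 0 := by
  refine LinearMap.ext fun x ↦ funext fun ⟨⟨p, q⟩, h⟩ ↦ ?_
  have hpq : p + q = n := mem_antidiagonal.mp h
  rw [LinearMap.comp_apply, tensorTotalD_apply C D _ p q h (by simp; omega) (by simp; omega),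
    LinearMap.coe_piMap, Pi.map_apply, Pi.map_apply,
    LinearMap.rTensor_map, LinearMap.lTensor_map,
    ← ModuleCat.hom_comp, ← ModuleCat.hom_comp, hσ, hτ]
  simp

lemma piMap_comp_tensorTotalD_eq_zero {ρ : ∀ p, C.X p ⟶ V p} {π : ∀ q, D.X q ⟶ W q}
    (hρ : ∀ p m, C.d m p ≫ ρ p = 0) (hπ : ∀ q m, D.d m q ≫ π q = 0) (n : ℕ) :
    LinearMap.piMap (fun s : antidiagonal n ↦
      TensorProduct.map (ρ s.1.1).hom (π s.1.2).hom) ∘ₗ tensorTotalD C D n = 0 := by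
  refine LinearMap.ext fun x ↦ funext fun ⟨⟨p, q⟩, h⟩ ↦ ?_
  have hpq : p + q = n := mem_antidiagonal.mp h
  rw [LinearMap.comp_apply, LinearMap.coe_piMap, Pi.map_apply,
    tensorTotalD_apply C D x p q h (by simp; omega) (by simp; omega), map_add, map_smul,
    LinearMap.map_rTensor, LinearMap.map_lTensor, ← ModuleCat.hom_comp, ← ModuleCat.hom_comp,
    hρ, hπ]
  simp

end Family

/-- One half of the Künneth formula: tensor products of split homology classes survive in the
total complex. -/
lemma sum_length_homology_tensor_le (C D : ChainComplex (ModuleCat.{u} R) ℕ)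
    [∀ i, IsSemisimpleModule R (C.X i)] [∀ i, IsSemisimpleModule R (D.X i)] (n : ℕ) :
    ∑ s ∈ antidiagonal n, Module.length R (C.homology s.1 ⊗[R] D.homology s.2) ≤
      Module.length R ((tensorTotal C D).homology n) := by
  choose σ ρ hσ hρ hσρ using fun p ↦ exists_split_homology C p
  choose τ π hτ hπ hτπ using fun q ↦ exists_split_homology D q
  let W : ModuleCat.{u} R :=
    ModuleCat.of R (∀ s : antidiagonal n, C.homology s.1.1 ⊗[R] D.homology s.1.2)
  let ι : W ⟶ (tensorTotal C D).X n := ModuleCat.ofHom <|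
    LinearMap.piMap fun s ↦ TensorProduct.map (σ s.1.1).hom (τ s.1.2).hom
  let κ : (tensorTotal C D).X n ⟶ W := ModuleCat.ofHom <|
    LinearMap.piMap fun s ↦ TensorProduct.map (ρ s.1.1).hom (π s.1.2).hom
  have hι (m : ℕ) : ι ≫ (tensorTotal C D).d n m = 0 := by
    by_cases hm : m + 1 = n
    · subst hm
      rw [tensorTotal_d]
      exact ModuleCat.hom_ext (tensorTotalD_comp_piMap_eq_zero hσ hτ m)
    · rw [(tensorTotal C D).shape _ _ hm, comp_zero]
  have hκ (m : ℕ) : (tensorTotal C D).d m n ≫ κ = 0 := by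
    by_cases hm : n + 1 = m
    · subst hm
      rw [tensorTotal_d]
      exact ModuleCat.hom_ext (piMap_comp_tensorTotalD_eq_zero hρ hπ n)
    · rw [(tensorTotal C D).shape _ _ hm, zero_comp]
  have hικ : ι ≫ κ = 𝟙 W := by
    refine ModuleCat.hom_ext (LinearMap.ext fun x ↦ funext fun s ↦ ?_)
    change TensorProduct.map _ _ (TensorProduct.map _ _ (x s)) = x s
    rw [TensorProduct.map_map, ← ModuleCat.hom_comp, ← ModuleCat.hom_comp, hσρ, hτπ]
    exact LinearMap.congr_fun TensorProduct.map_id (x s)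
  have hW : Module.length R W = _ := Module.length_pi_of_fintype ..
  rw [← Finset.sum_coe_sort, ← hW]
  exact length_le_length_homology hι hκ hικ

end SplitHomology

section BaseChange

variable {R : Type u} [CommRing R] (I m : Ideal R)

lemma compatibleSMul_quotient (V W : Type*) [AddCommGroup V] [AddCommGroup W] [Module R V]
    [Module R W] [Module (R ⧸ I) V] [Module (R ⧸ I) W] [IsScalarTower R (R ⧸ I) V]
    [IsScalarTower R (R ⧸ I) W] : TensorProduct.CompatibleSMul R (R ⧸ I) V W :=
  .of_algebraMap_surjective V W Ideal.Quotient.mk_surjective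

/-- Base change to `R ⧸ I` commutes with tensor products. Both sides are formed over `R`, which
makes no difference because `R ⟶ R ⧸ I` is surjective. -/
noncomputable def quotientTensorDistrib (X Y : Type*) [AddCommGroup X] [AddCommGroup Y]
    [Module R X] [Module R Y] :
    (R ⧸ I) ⊗[R] (X ⊗[R] Y) ≃ₗ[R] ((R ⧸ I) ⊗[R] X) ⊗[R] ((R ⧸ I) ⊗[R] Y) :=
  have := compatibleSMul_quotient I ((R ⧸ I) ⊗[R] X) ((R ⧸ I) ⊗[R] Y)
  (AlgebraTensorModule.distribBaseChange R (R ⧸ I) X Y).restrictScalars R ≪≫ₗ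
    equivOfCompatibleSMul R (R ⧸ I) R _ _

lemma quotientTensorDistrib_tmul_rTensor {X X' : Type*} [AddCommGroup X] [AddCommGroup X']
    [Module R X] [Module R X'] (f : X →ₗ[R] X') (Y : Type*) [AddCommGroup Y] [Module R Y]
    (a : R ⧸ I) (x : X ⊗[R] Y) :
    quotientTensorDistrib I X' Y (a ⊗ₜ f.rTensor Y x) =
      (f.lTensor (R ⧸ I)).rTensor _ (quotientTensorDistrib I X Y (a ⊗ₜ x)) := by
  induction x with
  | zero => simp
  | tmul => rfl
  | add => simp only [map_add, tmul_add, *]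

lemma quotientTensorDistrib_tmul_lTensor {Y Y' : Type*} [AddCommGroup Y] [AddCommGroup Y']
    [Module R Y] [Module R Y'] (g : Y →ₗ[R] Y') (X : Type*) [AddCommGroup X] [Module R X]
    (a : R ⧸ I) (x : X ⊗[R] Y) :
    quotientTensorDistrib I X Y' (a ⊗ₜ g.lTensor X x) =
      (g.lTensor (R ⧸ I)).lTensor _ (quotientTensorDistrib I X Y (a ⊗ₜ x)) := by
  induction x with
  | zero => simp
  | tmul => rfl
  | add => simp only [map_add, tmul_add, *]

/-- Base change to `R ⧸ I` commutes with the terms of the total complex. -/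
noncomputable def quotientTensorTotalDegreeEquiv (C D : ChainComplex (ModuleCat.{u} R) ℕ) (n : ℕ) :
    (R ⧸ I) ⊗[R] TensorTotalDegree C D n ≃ₗ[R]
      TensorTotalDegree (tensorComplex (.of R (R ⧸ I)) C) (tensorComplex (.of R (R ⧸ I)) D) n :=
  TensorProduct.piRight R R (R ⧸ I) _ ≪≫ₗ
    LinearEquiv.piCongrRight fun s ↦ quotientTensorDistrib I (C.X s.1.1) (D.X s.1.2)

lemma quotientTensorTotalDegreeEquiv_comp_lTensor (C D : ChainComplex (ModuleCat.{u} R) ℕ) (n : ℕ) :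
    (quotientTensorTotalDegreeEquiv I C D n).toLinearMap ∘ₗ
        (tensorTotalD C D n).lTensor (R ⧸ I) =
      tensorTotalD (tensorComplex (.of R (R ⧸ I)) C) (tensorComplex (.of R (R ⧸ I)) D) n ∘ₗ
        (quotientTensorTotalDegreeEquiv I C D (n + 1)).toLinearMap := by
  refine TensorProduct.ext' fun a x ↦ funext fun ⟨⟨p, q⟩, h⟩ ↦ ?_
  have hpq : p + q = n := mem_antidiagonal.mp h
  change quotientTensorDistrib I (C.X p) (D.X q) (a ⊗ₜ tensorTotalD C D n x ⟨(p, q), h⟩) =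
    tensorTotalD _ _ n (quotientTensorTotalDegreeEquiv I C D (n + 1) (a ⊗ₜ x)) ⟨(p, q), h⟩
  rw [tensorTotalD_apply _ _ _ p q h (by simp; omega) (by simp; omega),
    tensorTotalD_apply _ _ _ p q h (by simp; omega) (by simp; omega), tmul_add, tmul_smul, map_add,
    map_smul, quotientTensorDistrib_tmul_rTensor, quotientTensorDistrib_tmul_lTensor]
  rfl

/-- Base change to `R ⧸ I` commutes with total complexes. -/
noncomputable def quotientTensorTotalIso (C D : ChainComplex (ModuleCat.{u} R) ℕ) :
    tensorComplex (.of R (R ⧸ I)) (tensorTotal C D) ≅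
      tensorTotal (tensorComplex (.of R (R ⧸ I)) C) (tensorComplex (.of R (R ⧸ I)) D) :=
  HomologicalComplex.Hom.isoOfComponents
    (fun n ↦ (quotientTensorTotalDegreeEquiv I C D n).toModuleIso) <| by
  rintro _ n rfl
  have hd : (tensorComplex (.of R (R ⧸ I)) (tensorTotal C D)).d (n + 1) n =
      ModuleCat.ofHom ((tensorTotalD C D n).lTensor (R ⧸ I)) :=
    congrArg (fun d ↦ ModuleCat.of R (R ⧸ I) ◁ d) (tensorTotal_d C D n)
  rw [hd, tensorTotal_d]
  exact ModuleCat.hom_ext (quotientTensorTotalDegreeEquiv_comp_lTensor I C D n).symm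

variable [m.IsMaximal]

lemma exists_equiv_finsupp_quotient {V : Type u} [AddCommGroup V] [Module R V]
    (hV : m ≤ Module.annihilator R V) : ∃ ι : Type u, Nonempty (V ≃ₗ[R] (ι →₀ R ⧸ m)) := by
  have hV' : Module.IsTorsionBySet R V m :=
    (Module.isTorsionBySet_iff_subset_annihilator R V).mpr hV
  let := hV'.module
  let := Ideal.Quotient.field m
  have : IsScalarTower R (R ⧸ m) V := hV'.isScalarTower
  exact ⟨_, ⟨(Module.Basis.ofVectorSpace (R ⧸ m) V).repr.restrictScalars R⟩⟩

lemma isSimpleModule_quotient : IsSimpleModule R (R ⧸ m) :=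
  isSimpleModule_iff_quot_maximal.mpr ⟨m, inferInstance, ⟨LinearEquiv.refl R _⟩⟩

lemma isSemisimpleModule_of_le_annihilator {V : Type u} [AddCommGroup V] [Module R V]
    (hV : m ≤ Module.annihilator R V) : IsSemisimpleModule R V := by
  obtain ⟨ι, ⟨e⟩⟩ := exists_equiv_finsupp_quotient m hV
  have := isSimpleModule_quotient m
  exact .congr e

lemma length_tensorProduct_of_le_annihilator {V W : Type u} [AddCommGroup V] [Module R V]
    [AddCommGroup W] [Module R W] (hV : m ≤ Module.annihilator R V)
    (hW : m ≤ Module.annihilator R W) :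
    Module.length R (V ⊗[R] W) = Module.length R V * Module.length R W := by
  obtain ⟨ι, ⟨e⟩⟩ := exists_equiv_finsupp_quotient m hV
  obtain ⟨κ, ⟨f⟩⟩ := exists_equiv_finsupp_quotient m hW
  have := compatibleSMul_quotient m (R ⧸ m) (R ⧸ m)
  have hm : Module.length R (R ⧸ m) = 1 :=
    Module.length_eq_one_iff.mpr (isSimpleModule_quotient m)
  let φ : V ⊗[R] W ≃ₗ[R] (ι × κ →₀ R ⧸ m) :=
    TensorProduct.congr e f ≪≫ₗ finsuppTensorFinsupp R R .. ≪≫ₗ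
      Finsupp.mapRange.linearEquiv ((lidOfCompatibleSMul R (R ⧸ m) (R ⧸ m)).restrictScalars R)
  rw [φ.length_eq, e.length_eq, f.length_eq, Module.length_finsupp, Module.length_finsupp,
    Module.length_finsupp, hm, ENat.card_prod]
  simp

end BaseChange

section Inequality

variable {R : Type u} [CommRing R] (m : Ideal R)

lemma le_annihilator_quotient_tensorProduct (X : Type*) [AddCommGroup X] [Module R X] :
    m ≤ Module.annihilator R ((R ⧸ m) ⊗[R] X) := by
  intro r hr
  refine Module.mem_annihilator.mpr fun x ↦ ?_
  induction x with
  | zero => exact smul_zero r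
  | tmul a x =>
    have : r • a = 0 := by
      rw [Algebra.smul_def, Ideal.Quotient.algebraMap_eq, Ideal.Quotient.eq_zero_iff_mem.mpr hr,
        zero_mul]
    rw [smul_tmul', this, zero_tmul]
  | add x y hx hy => rw [smul_add, hx, hy, add_zero]

variable [m.IsMaximal]

lemma sum_length_homology_mul_le (C D : ChainComplex (ModuleCat.{u} R) ℕ) (n : ℕ) :
    ∑ s ∈ antidiagonal n,
      Module.length R ((tensorComplex (.of R (R ⧸ m)) C).homology s.1) *
        Module.length R ((tensorComplex (.of R (R ⧸ m)) D).homology s.2) ≤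
      Module.length R ((tensorComplex (.of R (R ⧸ m)) (tensorTotal C D)).homology n) := by
  have hss (E : ChainComplex (ModuleCat.{u} R) ℕ) (i : ℕ) :
      IsSemisimpleModule R ((tensorComplex (.of R (R ⧸ m)) E).X i) :=
    isSemisimpleModule_of_le_annihilator m (le_annihilator_quotient_tensorProduct m (E.X i))
  have hann (E : ChainComplex (ModuleCat.{u} R) ℕ) (i : ℕ) :
      m ≤ Module.annihilator R ((tensorComplex (.of R (R ⧸ m)) E).homology i) := by
    obtain ⟨σ, ρ, -, -, h⟩ := exists_split_homology (tensorComplex (.of R (R ⧸ m)) E) i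
    have : IsSplitMono σ := ⟨⟨ρ, h⟩⟩
    exact (le_annihilator_quotient_tensorProduct m (E.X i)).trans
      (LinearMap.annihilator_le_of_injective σ.hom
        ((ModuleCat.mono_iff_injective σ).mp inferInstance))
  rw [(HomologicalComplex.homologyMapIso (quotientTensorTotalIso m C D)
    n).toLinearEquiv.length_eq]
  refine le_trans (Finset.sum_le_sum fun s _ ↦ ?_) (sum_length_homology_tensor_le _ _ n)
  rw [length_tensorProduct_of_le_annihilator m (hann C _) (hann D _)]

theorem stmt_19_general (M N : ModuleCat.{u} R) (n : ℕ) :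
    ∑ i ∈ Finset.range (n + 1),
        torLength (.of R (R ⧸ m)) i M * torLength (.of R (R ⧸ m)) (n - i) N ≤
      ∑ i ∈ Finset.range (n + 1),
        torLength (.of R (R ⧸ m)) (n - i) (((Tor (ModuleCat.{u} R) i).obj M).obj N) := by
  let P := projectiveResolution M
  let Q := projectiveResolution N
  calc
    _ = ∑ s ∈ antidiagonal n,
        Module.length R ((tensorComplex (.of R (R ⧸ m)) P.complex).homology s.1) *
          Module.length R ((tensorComplex (.of R (R ⧸ m)) Q.complex).homology s.2) := by
      simp only [length_homology_tensorComplex_resolution,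
        Finset.Nat.sum_antidiagonal_eq_sum_range_succ_mk]
    _ ≤ _ := sum_length_homology_mul_le m P.complex Q.complex n
    _ ≤ _ := length_homology_tensorComplex_le _ _ n
    _ = _ := Finset.sum_congr rfl fun i _ ↦
      torLength_congr _ _ (nonempty_homology_tensorTotal_iso P Q i).some

end Inequality

theorem stmt_19 (R : Type u) [CommRing R] [IsLocalRing R] [IsNoetherianRing R]
    (M N : ModuleCat.{u} R) [Module.Finite R M] [Module.Finite R N] (n : ℕ) :
    ∑ i ∈ Finset.range (n + 1), betti R i M * betti R (n - i) N ≤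
      ∑ i ∈ Finset.range (n + 1),
        betti R (n - i) (((Tor (ModuleCat.{u} R) i).obj M).obj N) := by
  simpa only [torLength, Module.length_eq_height] using!
    stmt_19_general (IsLocalRing.maximalIdeal R) M N n
end
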